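/- arXiv:2507.17067 — 6 statements merged into one kernel-verified Lean document; each statement's English description precedes it below -/
import Mathlib

section
/- Let λ ∈ 𝔥*. The map τ : Ŵ_[λ] → Λ/Λ_r defined by τ(w) = wλ − λ + Λ_r is a group homomorphism whose kernel is exactly W_[λ]. Consequently W_[λ] is a normal subgroup of Ŵ_[λ], τ induces an injective group homomorphism Ŵ_[λ]/W_[λ] ↪ Λ/Λ_r, and in particular the quotient group Ŵ_[λ]/W_[λ] is abelian. -/
/-!
Write `d w = wλ − λ`. It is a cocycle: `d (w₁w₂) = w₁ (d w₂) + d w₁`. The Weyl group acts trivially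
on `Λ/Λ_r` (`weyl_sub_mem_rootLattice`), so if `d w₂ ∈ Λ` then `w₁ (d w₂) ≡ d w₂` modulo `Λ_r`, and
the cocycle becomes the homomorphism `τ` on `Ŵ_[λ]`. Since `Ŵ_[λ]` is closed under products and
inverses (`inWeightLattice_mul_sub`, `inWeightLattice_inv_sub`), the statements on the kernel,
normality, injectivity and commutators are computations of `τ` in the abelian group `V/Λ_r`.
-/

noncomputable section

variable {V : Type*} [AddCommGroup V] [Module ℂ V]

/-- `x` lies in the weight lattice `Λ = {x : ⟨x, α∨⟩ ∈ ℤ for all α ∈ Φ}`. -/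
def InWeightLattice (Φ : Finset V) (coroot : V → (V →ₗ[ℂ] ℂ)) (x : V) : Prop :=
  ∀ α ∈ Φ, ∃ n : ℤ, coroot α x = (n : ℂ)

/-- An element `w` of the Weyl group acts trivially on `Λ/Λ_r`: a reflection moves a weight `x` by
the integral multiple `⟨x, α∨⟩ α` of a root, and this propagates to products and inverses
because `Λ` is stable under `W`. -/
theorem weyl_sub_mem_rootLattice
    (Φ : Finset V) (coroot : V → (V →ₗ[ℂ] ℂ)) (s : V → (V ≃ₗ[ℂ] V))
    (W : Subgroup (V ≃ₗ[ℂ] V)) (Λr : AddSubgroup V)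
    (hs : ∀ α ∈ Φ, ∀ x : V, s α x = x - coroot α x • α)
    (hW : W = Subgroup.closure (s '' (Φ : Set V)))
    (hΛr : Λr = AddSubgroup.closure (Φ : Set V))
    (hWΛ : ∀ w ∈ W, ∀ x : V, InWeightLattice Φ coroot x → InWeightLattice Φ coroot (w x))
    {w : V ≃ₗ[ℂ] V} (hw : w ∈ W) {x : V} (hx : InWeightLattice Φ coroot x) :
    w x - x ∈ Λr := by
  have hw' := hw
  rw [hW] at hw'
  induction hw' using Subgroup.closure_induction generalizing x with
  | mem w h =>
    obtain ⟨α, hα, rfl⟩ := h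
    obtain ⟨n, hn⟩ := hx α hα
    have hαr : α ∈ Λr := hΛr ▸ AddSubgroup.subset_closure hα
    have hmem := Λr.neg_mem (Λr.zsmul_mem hαr n)
    rw [hs α hα, hn, Int.cast_smul_eq_zsmul]
    convert hmem using 1
    abel
  | one => simp
  | mul u v hu hv ihu ihv =>
    rw [← hW] at hu hv
    have := Λr.add_mem (ihu hu (hWΛ v hv x hx)) (ihv hv hx)
    simpa using this
  | inv u hu ih =>
    rw [← hW] at hu
    have hback : u (u⁻¹ x) = x := u.apply_symm_apply x
    have := Λr.neg_mem (ih hu (hWΛ _ (W.inv_mem hu) x hx))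
    rwa [hback, neg_sub] at this

/-- Integrality of `w⁻¹λ − λ`, which equals `−w⁻¹(wλ − λ)`. -/
theorem inWeightLattice_inv_sub
    (Φ : Finset V) (coroot : V → (V →ₗ[ℂ] ℂ)) (W : Subgroup (V ≃ₗ[ℂ] V))
    (hWΛ : ∀ w ∈ W, ∀ x : V, InWeightLattice Φ coroot x → InWeightLattice Φ coroot (w x))
    {lam : V} {w : V ≃ₗ[ℂ] V} (hw : w ∈ W) (h : InWeightLattice Φ coroot (w lam - lam)) :
    InWeightLattice Φ coroot (w⁻¹ lam - lam) := by
  intro α hα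
  obtain ⟨n, hn⟩ := hWΛ _ (W.inv_mem hw) _ h α hα
  have hback : w⁻¹ (w lam) = lam := w.symm_apply_apply lam
  refine ⟨-n, ?_⟩
  rw [map_sub, hback] at hn
  rw [← neg_sub, map_neg, hn, Int.cast_neg]

/-- Integrality of `w₁w₂λ − λ`, which equals `w₁(w₂λ − λ) + (w₁λ − λ)`. -/
theorem inWeightLattice_mul_sub
    (Φ : Finset V) (coroot : V → (V →ₗ[ℂ] ℂ)) (W : Subgroup (V ≃ₗ[ℂ] V))
    (hWΛ : ∀ w ∈ W, ∀ x : V, InWeightLattice Φ coroot x → InWeightLattice Φ coroot (w x))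
    {lam : V} {w₁ w₂ : V ≃ₗ[ℂ] V} (hw₁ : w₁ ∈ W)
    (h₁ : InWeightLattice Φ coroot (w₁ lam - lam))
    (h₂ : InWeightLattice Φ coroot (w₂ lam - lam)) :
    InWeightLattice Φ coroot ((w₁ * w₂) lam - lam) := by
  intro α hα
  obtain ⟨m, hm⟩ := h₁ α hα
  obtain ⟨n, hn⟩ := hWΛ w₁ hw₁ _ h₂ α hα
  refine ⟨n + m, ?_⟩
  rw [Int.cast_add, ← hm, ← hn, ← map_add]
  simp

/-- Let `λ ∈ 𝔥*`.  The map `τ : Ŵ_[λ] → Λ/Λ_r`, `τ(w) = wλ − λ + Λ_r`, is a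
group homomorphism whose kernel is exactly `W_[λ]`.  Consequently `W_[λ]` is a normal subgroup
of `Ŵ_[λ]`, `τ` induces an injective group homomorphism `Ŵ_[λ]/W_[λ] ↪ Λ/Λ_r`, and in
particular the quotient `Ŵ_[λ]/W_[λ]` is abelian.

Setting: `Φ` is a finite reduced crystallographic root system in the complex vector space `V`,
with coroot pairing `coroot`, reflections `s`, and Weyl group `W` (the subgroup of `GL(V)`
generated by the reflections).  `Λ` is the weight lattice (membership recorded by
`InWeightLattice Φ coroot`), `Λr` is the root lattice (the `ℤ`-span of `Φ`); `Λ_r ⊆ Λ` and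
both are `W`-stable.  For `w ∈ W`: `w ∈ Ŵ_[λ]` iff `wλ − λ ∈ Λ`, and `w ∈ W_[λ]` iff
`wλ − λ ∈ Λ_r`.  The coset `τ w = wλ − λ + Λ_r` is realized in `V ⧸ Λr`. -/
theorem tau_hom_kernel_integralWeylGroup
    (Φ : Finset V) (coroot : V → (V →ₗ[ℂ] ℂ)) (s : V → (V ≃ₗ[ℂ] V))
    (W : Subgroup (V ≃ₗ[ℂ] V)) (Λr : AddSubgroup V)
    (hΦ0 : (0 : V) ∉ Φ)
    (hspan : Submodule.span ℂ (Φ : Set V) = ⊤)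
    (h2 : ∀ α ∈ Φ, coroot α α = 2)
    (hred : ∀ α ∈ Φ, ∀ c : ℂ, c • α ∈ (Φ : Set V) → c = 1 ∨ c = -1)
    (hcrys : ∀ α ∈ Φ, ∀ β ∈ Φ, ∃ n : ℤ, coroot α β = (n : ℂ))
    (hs : ∀ α ∈ Φ, ∀ x : V, s α x = x - coroot α x • α)
    (hsΦ : ∀ α ∈ Φ, ∀ β ∈ Φ, s α β ∈ Φ)
    (hW : W = Subgroup.closure (s '' (Φ : Set V)))
    (hΛr : Λr = AddSubgroup.closure (Φ : Set V))
    (hsub : ∀ x ∈ Λr, InWeightLattice Φ coroot x)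
    (hWΛ : ∀ w ∈ W, ∀ x : V, InWeightLattice Φ coroot x → InWeightLattice Φ coroot (w x))
    (hWΛr : ∀ w ∈ W, ∀ x ∈ Λr, w x ∈ Λr)
    (lam : V) :
    -- (1) `τ` is a group homomorphism `Ŵ_[λ] → Λ/Λ_r`:
    (∀ w₁ ∈ W, ∀ w₂ ∈ W,
        InWeightLattice Φ coroot (w₁ lam - lam) → InWeightLattice Φ coroot (w₂ lam - lam) →
        (QuotientAddGroup.mk ((w₁ * w₂) lam - lam) : V ⧸ Λr) =
          QuotientAddGroup.mk (w₁ lam - lam) + QuotientAddGroup.mk (w₂ lam - lam))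
    ∧ -- (2) the kernel of `τ` is exactly `W_[λ]`:
    (∀ w ∈ W, InWeightLattice Φ coroot (w lam - lam) →
        ((QuotientAddGroup.mk (w lam - lam) : V ⧸ Λr) = 0 ↔ w lam - lam ∈ Λr))
    ∧ -- (3) `W_[λ]` is a normal subgroup of `Ŵ_[λ]`:
    (∀ w ∈ W, InWeightLattice Φ coroot (w lam - lam) →
        ∀ u ∈ W, u lam - lam ∈ Λr → (w * u * w⁻¹) lam - lam ∈ Λr)
    ∧ -- (4) `τ` induces an injective homomorphism `Ŵ_[λ]/W_[λ] ↪ Λ/Λ_r`: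
    (∀ w₁ ∈ W, ∀ w₂ ∈ W,
        InWeightLattice Φ coroot (w₁ lam - lam) → InWeightLattice Φ coroot (w₂ lam - lam) →
        (QuotientAddGroup.mk (w₁ lam - lam) : V ⧸ Λr) = QuotientAddGroup.mk (w₂ lam - lam) →
        (w₂⁻¹ * w₁) lam - lam ∈ Λr)
    ∧ -- (5) the quotient `Ŵ_[λ]/W_[λ]` is abelian:
    (∀ w₁ ∈ W, ∀ w₂ ∈ W,
        InWeightLattice Φ coroot (w₁ lam - lam) → InWeightLattice Φ coroot (w₂ lam - lam) →
        (w₁ * w₂ * w₁⁻¹ * w₂⁻¹) lam - lam ∈ Λr) := by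
  have hmul : ∀ w₁ ∈ W, ∀ w₂ ∈ W,
      InWeightLattice Φ coroot (w₁ lam - lam) → InWeightLattice Φ coroot (w₂ lam - lam) →
      (QuotientAddGroup.mk ((w₁ * w₂) lam - lam) : V ⧸ Λr) =
        QuotientAddGroup.mk (w₁ lam - lam) + QuotientAddGroup.mk (w₂ lam - lam) := by
    intro w₁ hw₁ w₂ _ _ h₂
    have hmem := weyl_sub_mem_rootLattice Φ coroot s W Λr hs hW hΛr hWΛ hw₁ h₂
    rw [← QuotientAddGroup.mk_add, eq_comm, QuotientAddGroup.eq]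
    convert hmem using 1
    simp only [LinearEquiv.mul_apply, map_sub]
    abel
  have hker : ∀ w : V ≃ₗ[ℂ] V,
      (QuotientAddGroup.mk (w lam - lam) : V ⧸ Λr) = 0 ↔ w lam - lam ∈ Λr :=
    fun w => QuotientAddGroup.eq_zero_iff _
  have hInt : ∀ w ∈ W, InWeightLattice Φ coroot (w lam - lam) →
      InWeightLattice Φ coroot (w⁻¹ lam - lam) :=
    fun w hw h => inWeightLattice_inv_sub Φ coroot W hWΛ hw h
  have hIntMul : ∀ w₁ ∈ W, ∀ w₂ : V ≃ₗ[ℂ] V, InWeightLattice Φ coroot (w₁ lam - lam) →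
      InWeightLattice Φ coroot (w₂ lam - lam) →
      InWeightLattice Φ coroot ((w₁ * w₂) lam - lam) :=
    fun w₁ hw₁ w₂ h₁ h₂ => inWeightLattice_mul_sub Φ coroot W hWΛ hw₁ h₁ h₂
  have hinv : ∀ w ∈ W, InWeightLattice Φ coroot (w lam - lam) →
      (QuotientAddGroup.mk (w⁻¹ lam - lam) : V ⧸ Λr) = -QuotientAddGroup.mk (w lam - lam) := by
    intro w hw h
    have hτ := hmul _ (W.inv_mem hw) w hw (hInt w hw h) h
    rw [inv_mul_cancel, LinearEquiv.coe_one, id_eq, sub_self, QuotientAddGroup.mk_zero] at hτ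
    exact eq_neg_of_add_eq_zero_left hτ.symm
  refine ⟨hmul, fun w _ _ => hker w, ?_, ?_, ?_⟩
  · intro w hw h u hu hur
    have hui := hsub _ hur
    rw [← hker, hmul _ (W.mul_mem hw hu) _ (W.inv_mem hw) (hIntMul w hw u h hui) (hInt w hw h),
      hmul w hw u hu h hui, hinv w hw h, (hker u).2 hur]
    abel
  · intro w₁ hw₁ w₂ hw₂ h₁ h₂ heq
    rw [← hker, hmul _ (W.inv_mem hw₂) _ hw₁ (hInt w₂ hw₂ h₂) h₁, hinv w₂ hw₂ h₂, heq]
    abel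
  · intro w₁ hw₁ w₂ hw₂ h₁ h₂
    have h₁₂ := hIntMul w₁ hw₁ w₂ h₁ h₂
    have hw₁₂ := W.mul_mem hw₁ hw₂
    have hi₁ := hInt w₁ hw₁ h₁
    rw [← hker, hmul _ (W.mul_mem hw₁₂ (W.inv_mem hw₁)) _ (W.inv_mem hw₂)
        (hIntMul _ hw₁₂ _ h₁₂ hi₁) (hInt w₂ hw₂ h₂),
      hmul _ hw₁₂ _ (W.inv_mem hw₁) h₁₂ hi₁, hmul w₁ hw₁ w₂ hw₂ h₁ h₂,
      hinv w₁ hw₁ h₁, hinv w₂ hw₂ h₂]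
    abel

end
end

section
/- Let λ ∈ 𝔥* and let α ∈ Δ_[λ] be a simple root of the integral root system Φ_[λ]. Then there exists a dominant weight μ ∈ λ + Λ whose stabilizer in W under the dot action is exactly the two-element subgroup {1, s_α}, where s_α is the reflection associated to α. -/
/-!
Write `ν = μ + ρ`. The weight `ρ` lies in `Λ` (`IsRootSys.halfSum_mem`, a parity argument valid for
any choice of one root from each pair `{γ, -γ}`), so it suffices to find `ν ∈ λ + Λ` with
`⟨ν, α∨⟩ = 0` and `⟨ν, β∨⟩ > 0` for the other simple roots `β` of `Φ_[λ]`, and to compute its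
stabilizer for the linear action.

Existence of `ν` (`IsIntegralBase.exists_nu`): some weight `r` has `⟨r, α∨⟩ = 1`, namely the
half-sum of a positive system of `Φ` in which `α` is simple. The sum `θ` of all positive roots of
`Φ_[λ]` other than `α` satisfies `⟨θ, α∨⟩ = 0` and `⟨θ, β∨⟩ = 2 - ⟨α, β∨⟩ > 0` for simple `β ≠ α`.
Hence `ν = λ - ⟨λ, α∨⟩ r + N θ` works for `N` large.

Dominance (`IsIntegralBase.coroot_nonneg`): by means of the invariant form
`(x, y) = ∑ ⟨x, γ∨⟩⟨y, γ∨⟩`, the coroot of a positive root of `Φ_[λ]` is a nonnegative combination of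
simple coroots, so it is nonnegative on `ν`, and it vanishes on `ν` only for the root `α`. Roots
outside `Φ_[λ]` have nonintegral pairing with `ν`.

Stabilizer: if `w ν = ν`, then `w` preserves `{±α}`, the set of roots whose coroots vanish on `ν`.
After multiplying by `s_α` if necessary, `w` fixes `α` as well. Then `w` preserves the positive
system cut out by the lexicographic functional `(Re (ν,·), Im (ν,·), Re (α,·))`, and an element of
the Weyl group preserving a positive system is trivial (`IsRootSys.eq_one_of_pos`), by the
classical exchange argument for words in simple reflections.
-/

noncomputable section

variable {V : Type*} [AddCommGroup V] [Module ℂ V]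

/-- The dot action of `W` on `𝔥*`: `w · x = w(x + ρ) − ρ`. -/
def dotAct (ρ : V) (w : V ≃ₗ[ℂ] V) (x : V) : V := w (x + ρ) - ρ

/-- `x` is dominant: `⟨x + ρ, α∨⟩ ∉ {−1, −2, −3, …}` for every positive root `α`. -/
def IsDominant (Φpos : Finset V) (coroot : V → (V →ₗ[ℂ] ℂ)) (ρ : V) (x : V) : Prop :=
  ∀ α ∈ Φpos, ∀ n : ℤ, n < 0 → coroot α (x + ρ) ≠ (n : ℂ)

/-- A finite reduced crystallographic root system `Φ` spanning `V`, with coroots `c` and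
reflections `s`; the values of `c` and `s` outside `Φ` are irrelevant. -/
structure IsRootSys (Φ : Finset V) (c : V → (V →ₗ[ℂ] ℂ)) (s : V → (V ≃ₗ[ℂ] V)) : Prop where
  span : Submodule.span ℂ (Φ : Set V) = ⊤
  two : ∀ α ∈ Φ, c α α = 2
  red : ∀ α ∈ Φ, ∀ z : ℂ, z • α ∈ (Φ : Set V) → z = 1 ∨ z = -1
  crys : ∀ α ∈ Φ, ∀ β ∈ Φ, ∃ n : ℤ, c α β = (n : ℂ)
  refl : ∀ α ∈ Φ, ∀ x : V, s α x = x - c α x • α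
  maps : ∀ α ∈ Φ, ∀ β ∈ Φ, s α β ∈ Φ

namespace IsRootSys

variable {Φ : Finset V} {c : V → (V →ₗ[ℂ] ℂ)} {s : V → (V ≃ₗ[ℂ] V)}

/-! ### Coroots, reflections and the Weyl group -/

lemma refl_self (R : IsRootSys Φ c s) {α : V} (hα : α ∈ Φ) : s α α = -α := by
  rw [R.refl α hα, R.two α hα]; module

lemma neg_mem (R : IsRootSys Φ c s) {α : V} (hα : α ∈ Φ) : -α ∈ Φ := by
  rw [← R.refl_self hα]; exact R.maps α hα α hα

lemma ne_zero (R : IsRootSys Φ c s) {α : V} (hα : α ∈ Φ) : α ≠ 0 := by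
  rintro rfl
  simpa using R.two 0 hα

lemma refl_refl (R : IsRootSys Φ c s) {α : V} (hα : α ∈ Φ) (x : V) : s α (s α x) = x := by
  rw [R.refl α hα (s α x), R.refl α hα x, map_sub, map_smul, R.two α hα, smul_eq_mul]
  module

lemma refl_mul_self (R : IsRootSys Φ c s) {α : V} (hα : α ∈ Φ) : s α * s α = 1 := by
  ext x; exact R.refl_refl hα x

lemma refl_inv (R : IsRootSys Φ c s) {α : V} (hα : α ∈ Φ) : (s α)⁻¹ = s α :=
  inv_eq_of_mul_eq_one_right (R.refl_mul_self hα)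

lemma coroot_refl (R : IsRootSys Φ c s) {α : V} (hα : α ∈ Φ) (x : V) :
    c α (s α x) = - c α x := by
  rw [R.refl α hα, map_sub, map_smul, R.two α hα, smul_eq_mul]; ring

/-- The coroot of `α` is the only functional `f` with `f α = 2` whose reflection preserves `Φ`. -/
lemma coroot_unique (R : IsRootSys Φ c s) {α : V} (hα : α ∈ Φ) {f : V →ₗ[ℂ] ℂ} (hf : f α = 2)
    (hf' : ∀ β ∈ Φ, β - f β • α ∈ Φ) : c α = f := by
  refine Module.Dual.eq_of_preReflection_mapsTo (x := α) (Φ := (Φ : Set V))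
    Φ.finite_toSet R.span (R.two α hα) ?_ hf ?_
  · intro β hβ
    rw [Module.preReflection_apply, ← R.refl α hα]
    exact R.maps α hα β hβ
  · intro β hβ
    rw [Module.preReflection_apply]
    exact hf' β hβ

lemma coroot_neg (R : IsRootSys Φ c s) {α : V} (hα : α ∈ Φ) : c (-α) = - c α := by
  refine R.coroot_unique (R.neg_mem hα) (by simp [R.two α hα]) fun β hβ => ?_
  have := R.maps α hα β hβ
  rw [R.refl α hα] at this
  simpa using this

lemma refl_neg (R : IsRootSys Φ c s) {α : V} (hα : α ∈ Φ) : s (-α) = s α := by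
  ext x
  rw [R.refl _ (R.neg_mem hα), R.refl _ hα, R.coroot_neg hα]
  simp

/-- A linear automorphism preserving `Φ` transports coroots. -/
lemma coroot_map (R : IsRootSys Φ c s) {w : V ≃ₗ[ℂ] V} (hw : ∀ β ∈ Φ, w β ∈ Φ) {α : V}
    (hα : α ∈ Φ) (x : V) : c (w α) (w x) = c α x := by
  have hsurj : ∀ β ∈ Φ, w.symm β ∈ Φ := by
    intro β hβ
    obtain ⟨γ, hγ, h⟩ := Finset.surj_on_of_inj_on_of_card_le (fun a (_ : a ∈ Φ) => w a) hw
      (fun a b _ _ h => w.injective h) le_rfl β hβ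
    rw [h]; simpa using hγ
  have key : c α = (c (w α)).comp (w : V →ₗ[ℂ] V) := by
    refine R.coroot_unique hα (by simp [R.two _ (hw α hα)]) fun β hβ => ?_
    have h := hsurj _ (R.maps _ (hw α hα) _ (hw β hβ))
    rw [R.refl _ (hw α hα)] at h
    simpa using h
  rw [key]; rfl

lemma refl_map (R : IsRootSys Φ c s) {w : V ≃ₗ[ℂ] V} (hw : ∀ β ∈ Φ, w β ∈ Φ) {α : V}
    (hα : α ∈ Φ) : s (w α) * w = w * s α := by
  ext x
  simp only [LinearEquiv.mul_apply]
  rw [R.refl _ (hw α hα), R.refl _ hα, R.coroot_map hw hα]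
  simp

lemma weyl_maps (R : IsRootSys Φ c s) {w : V ≃ₗ[ℂ] V}
    (hw : w ∈ Subgroup.closure (s '' (Φ : Set V))) : ∀ β ∈ Φ, w β ∈ Φ := by
  induction hw using Subgroup.closure_induction with
  | mem x hx =>
    obtain ⟨α, hα, rfl⟩ := hx
    exact R.maps α hα
  | one => exact fun β hβ => hβ
  | mul x y _ _ hx hy => exact fun β hβ => hx _ (hy β hβ)
  | inv x _ hx =>
    intro β hβ
    obtain ⟨γ, hγ, h⟩ := Finset.surj_on_of_inj_on_of_card_le (fun a (_ : a ∈ Φ) => x a) hx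
      (fun a b _ _ h => x.injective h) le_rfl β hβ
    rw [h]
    have : x⁻¹ (x γ) = γ := x.symm_apply_apply γ
    rwa [this]

/-! ### The canonical invariant form -/

/-- The canonical bilinear form `(x, y) ↦ ∑ ⟨x, γ∨⟩ ⟨y, γ∨⟩`, the sum running over all roots. -/
def form (Φ : Finset V) (c : V → (V →ₗ[ℂ] ℂ)) (x : V) : V →ₗ[ℂ] ℂ := ∑ γ ∈ Φ, c γ x • c γ

lemma form_apply (x y : V) : form Φ c x y = ∑ γ ∈ Φ, c γ x * c γ y := by
  simp [form]

lemma form_comm (x y : V) : form Φ c x y = form Φ c y x := by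
  simp only [form_apply, mul_comm]

lemma form_map (R : IsRootSys Φ c s) {w : V ≃ₗ[ℂ] V} (hw : ∀ β ∈ Φ, w β ∈ Φ) (x y : V) :
    form Φ c (w x) (w y) = form Φ c x y := by
  rw [form_apply, form_apply]
  symm
  refine Finset.sum_bij (fun a _ => w a) hw (fun a _ b _ h => w.injective h) ?_ ?_
  · intro β hβ
    obtain ⟨γ, hγ, h⟩ := Finset.surj_on_of_inj_on_of_card_le (fun a (_ : a ∈ Φ) => w a) hw
      (fun a b _ _ h => w.injective h) le_rfl β hβ
    exact ⟨γ, hγ, h.symm⟩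
  · intro γ hγ
    rw [R.coroot_map hw hγ, R.coroot_map hw hγ]

lemma two_form (R : IsRootSys Φ c s) {β : V} (hβ : β ∈ Φ) (x : V) :
    2 * form Φ c x β = c β x * form Φ c β β := by
  have h := R.form_map (R.maps β hβ) x β
  rw [R.refl_self hβ, R.refl β hβ, map_neg, form_comm, map_sub, map_smul, form_comm β x,
    smul_eq_mul] at h
  linear_combination -h

/-- The pairing `⟨β, α∨⟩` of roots as an integer (the floor only serves to extract it). -/
def pair (c : V → (V →ₗ[ℂ] ℂ)) (α β : V) : ℤ := ⌊(c α β).re⌋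

lemma pair_cast (R : IsRootSys Φ c s) {α β : V} (hα : α ∈ Φ) (hβ : β ∈ Φ) :
    c α β = (pair c α β : ℂ) := by
  obtain ⟨n, hn⟩ := R.crys α hα β hβ
  simp [pair, hn]

/-- The squared length of a root under the canonical form, as an integer. -/
def len (Φ : Finset V) (c : V → (V →ₗ[ℂ] ℂ)) (β : V) : ℤ := ∑ γ ∈ Φ, pair c γ β ^ 2

lemma len_cast (R : IsRootSys Φ c s) {β : V} (hβ : β ∈ Φ) :
    form Φ c β β = (len Φ c β : ℂ) := by
  rw [form_apply, len, Int.cast_sum]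
  refine Finset.sum_congr rfl fun γ hγ => ?_
  rw [R.pair_cast hγ hβ]; push_cast; ring

lemma pair_self (R : IsRootSys Φ c s) {β : V} (hβ : β ∈ Φ) : pair c β β = 2 := by
  have := R.pair_cast hβ hβ
  rw [R.two β hβ] at this
  exact_mod_cast this.symm

lemma len_pos (R : IsRootSys Φ c s) {β : V} (hβ : β ∈ Φ) : 0 < len Φ c β := by
  refine Finset.sum_pos' (fun γ _ => sq_nonneg _) ⟨β, hβ, ?_⟩
  rw [R.pair_self hβ]; norm_num

lemma pair_mul_len (R : IsRootSys Φ c s) {α β : V} (hα : α ∈ Φ) (hβ : β ∈ Φ) :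
    pair c α β * len Φ c α = pair c β α * len Φ c β := by
  have h1 := R.two_form hα β
  have h2 := R.two_form hβ α
  rw [form_comm] at h1
  rw [h2, R.len_cast hα, R.len_cast hβ, R.pair_cast hα hβ, R.pair_cast hβ hα] at h1
  exact_mod_cast h1.symm

lemma pair_pos_symm (R : IsRootSys Φ c s) {α β : V} (hα : α ∈ Φ) (hβ : β ∈ Φ)
    (h : 0 < pair c α β) : 0 < pair c β α := by
  have h1 := R.pair_mul_len hα hβ
  have h2 := R.len_pos hα
  have h3 := R.len_pos hβ
  have : 0 < pair c β α * len Φ c β := by rw [← h1]; positivity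
  exact (mul_pos_iff_of_pos_right h3).mp this

/-- If the Coxeter weight of two roots is `4`, then the orbit of one of them under the two
reflections would be infinite unless the roots are proportional. -/
lemma eq_or_eq_neg_of_pair_mul_eq_four (R : IsRootSys Φ c s) {α β : V} (hα : α ∈ Φ) (hβ : β ∈ Φ)
    (h : pair c α β * pair c β α = 4) : β = α ∨ β = -α := by
  have h4 : c α β * c β α = 4 := by
    rw [R.pair_cast hα hβ, R.pair_cast hβ hα]; exact_mod_cast h
  have key : c α β • α = (2 : ℂ) • β := by
    by_contra hne
    have : IsAddTorsionFree V := .of_isTorsionFree ℂ V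
    have hinf := (Module.infinite_range_reflection_reflection_iterate_iff
      (R.two α hα) (R.two β hβ) h4).mpr hne
    refine hinf (Φ.finite_toSet.subset ?_)
    rintro _ ⟨n, rfl⟩
    induction n with
    | zero => exact hβ
    | succ n ih =>
      simp only [Function.iterate_succ', Function.comp_apply] at ih ⊢
      have h1 := R.maps α hα _ (R.maps β hβ _ ih)
      rw [R.refl α hα, R.refl β hβ] at h1
      simpa [Module.reflection_apply] using h1
  have hβ' : β = (c α β / 2) • α := by
    rw [div_eq_inv_mul, mul_smul, key, smul_smul]; norm_num
  rcases R.red α hα (c α β / 2) (by rw [← hβ']; exact hβ) with h | h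
  · left; rw [hβ', h, one_smul]
  · right; rw [hβ', h]; module

lemma pair_mul_le_three (R : IsRootSys Φ c s) {α β : V} (hα : α ∈ Φ) (hβ : β ∈ Φ)
    (h1 : β ≠ α) (h2 : β ≠ -α) : pair c α β * pair c β α ≤ 3 := by
  have hsum : (0 : ℤ) ≤ ∑ γ ∈ Φ, (2 * pair c γ β - pair c α β * pair c γ α) ^ 2 :=
    Finset.sum_nonneg fun γ _ => sq_nonneg _
  have hcross : 2 * ∑ γ ∈ Φ, pair c γ β * pair c γ α = pair c α β * len Φ c α := by
    have h := R.two_form hα β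
    rw [form_apply, R.len_cast hα, R.pair_cast hα hβ,
      Finset.sum_congr rfl fun γ hγ => by rw [R.pair_cast hγ hβ, R.pair_cast hγ hα]] at h
    exact_mod_cast h
  have hexp : ∑ γ ∈ Φ, (2 * pair c γ β - pair c α β * pair c γ α) ^ 2
      = 4 * len Φ c β - 4 * pair c α β * (∑ γ ∈ Φ, pair c γ β * pair c γ α)
        + pair c α β ^ 2 * len Φ c α := by
    simp only [len, Finset.mul_sum, ← Finset.sum_sub_distrib, ← Finset.sum_add_distrib]
    exact Finset.sum_congr rfl fun γ _ => by ring
  have hm := R.pair_mul_len hα hβ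
  have hfin : ∑ γ ∈ Φ, (2 * pair c γ β - pair c α β * pair c γ α) ^ 2
      = (4 - pair c α β * pair c β α) * len Φ c β := by
    rw [hexp]
    linear_combination (-2 * pair c α β) * hcross - pair c α β * hm
  rw [hfin] at hsum
  have h4 : pair c α β * pair c β α ≤ 4 := by
    have := nonneg_of_mul_nonneg_left hsum (R.len_pos hβ)
    linarith
  have h5 : pair c α β * pair c β α ≠ 4 := fun h => by
    rcases R.eq_or_eq_neg_of_pair_mul_eq_four hα hβ h with h | h
    · exact h1 h
    · exact h2 h
  omega

/-! ### Freeness of the Weyl group on generic functionals -/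

section Free

variable {G : Type*} [AddCommGroup G] [LinearOrder G] [IsOrderedAddMonoid G]

/-- Induction over the roots that are positive for `h`, along increasing values of `h`. -/
lemma pos_induction (h : V →+ G) {p : V → Prop}
    (ind : ∀ β ∈ Φ, 0 < h β → (∀ δ ∈ Φ, 0 < h δ → h δ < h β → p δ) → p β) :
    ∀ β ∈ Φ, 0 < h β → p β := by
  classical
  by_contra! hcon
  obtain ⟨β, hβ, hpos, hn⟩ := hcon
  obtain ⟨γ, hγ, hmin⟩ := Finset.exists_min_image (Φ.filter fun β => 0 < h β ∧ ¬ p β) h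
    ⟨β, by simp [hβ, hpos, hn]⟩
  simp only [Finset.mem_filter] at hγ hmin
  refine hγ.2.2 (ind γ hγ.1 hγ.2.1 fun δ hδ hδpos hlt => ?_)
  by_contra hnp
  exact absurd (hmin δ ⟨hδ, hδpos, hnp⟩) (not_le.mpr hlt)

/-- The simple roots of the positive system `{γ ∈ Φ : 0 < h γ}`: the positive roots that are not
sums of two positive roots. -/
def Simple (Φ : Finset V) (h : V →+ G) (σ : V) : Prop :=
  σ ∈ Φ ∧ 0 < h σ ∧ ∀ β ∈ Φ, ∀ δ ∈ Φ, 0 < h β → 0 < h δ → σ ≠ β + δ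

/-- A simple reflection permutes the positive roots other than its own root. -/
lemma simple_refl_pos (R : IsRootSys Φ c s) {h : V →+ G} (hne : ∀ γ ∈ Φ, h γ ≠ 0) {σ β : V}
    (hσ : Simple Φ h σ) (hβ : β ∈ Φ) (hβpos : 0 < h β) (hβσ : β ≠ σ) : 0 < h (s σ β) := by
  obtain ⟨hσΦ, hσpos, hind⟩ := hσ
  by_contra hcon
  have hrefl : s σ β = β - pair c σ β • σ := by
    rw [R.refl σ hσΦ, R.pair_cast hσΦ hβ, Int.cast_smul_eq_zsmul]
  set k := pair c σ β with hk
  -- `δ = kσ - β` is a positive root, so that `kσ` is the sum of the positive roots `β` and `δ`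
  set δ := - s σ β with hδ
  have hsΦ := R.maps σ hσΦ β hβ
  have hδΦ : δ ∈ Φ := R.neg_mem hsΦ
  have hδpos : 0 < h δ := by
    rw [hδ, map_neg]
    exact neg_pos.mpr (lt_of_le_of_ne (not_lt.mp hcon) (hne _ hsΦ))
  have hsum : β + δ = k • σ := by rw [hδ, hrefl]; abel
  have hhsum : h β + h δ = k • h σ := by rw [← map_add, hsum, map_zsmul]
  have hkpos : 0 < k := by
    by_contra hk0
    have h1 : 0 ≤ (-k) • h σ := zsmul_nonneg hσpos.le (by omega)
    rw [neg_smul, ← hhsum] at h1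
    exact absurd (add_pos hβpos hδpos) (not_lt.mpr (neg_nonneg.mp h1))
  have hmpos : 0 < pair c β σ := R.pair_pos_symm hσΦ hβ hkpos
  have hβσ' : β ≠ -σ := by
    rintro rfl
    rw [map_neg] at hβpos
    exact lt_asymm hσpos (neg_pos.mp hβpos)
  have h3 := R.pair_mul_le_three hσΦ hβ hβσ hβσ'
  rw [← hk] at h3
  have hk1 : k ≠ 1 := fun h1 => by
    rw [h1, one_smul] at hsum
    exact hind β hβ δ hδΦ hβpos hδpos hsum.symm
  have hm1 : pair c β σ = 1 := by nlinarith [show 2 ≤ k by omega]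
  -- a positive root `γ` with `⟨σ, γ∨⟩ = 1` can be lowered by `σ`
  have lower : ∀ γ ∈ Φ, 0 < h γ → c γ σ = 1 → γ - σ ∈ Φ ∧ 0 < h (γ - σ) := by
    intro γ hγ hγpos hγσ
    have h1 := R.maps γ hγ σ hσΦ
    rw [R.refl γ hγ, hγσ, one_smul] at h1
    have h2 : γ - σ ∈ Φ := by simpa using R.neg_mem h1
    refine ⟨h2, lt_of_le_of_ne (not_lt.mp fun hlt => ?_) (hne _ h2).symm⟩
    refine hind γ hγ (σ - γ) h1 hγpos ?_ (by abel)
    rw [← neg_sub, map_neg]; exact neg_pos.mpr hlt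
  have hcβ : c β σ = 1 := by rw [R.pair_cast hβ hσΦ, hm1]; simp
  have hcδ : c δ σ = 1 := by
    have h1 := R.coroot_map (R.maps σ hσΦ) hβ σ
    rw [R.refl_self hσΦ, map_neg] at h1
    rw [hδ, R.coroot_neg hsΦ, LinearMap.neg_apply, h1, hcβ]
  obtain ⟨hβ1, hβ2⟩ := lower β hβ hβpos hcβ
  obtain ⟨hδ1, hδ2⟩ := lower δ hδΦ hδpos hcδ
  have hsum' : (β - σ) + (δ - σ) = (k - 2) • σ := by
    rw [sub_smul, ← hsum, two_smul]; abel
  rw [hm1] at h3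
  obtain h2 | h3 : k = 2 ∨ k = 3 := by omega
  · have := add_pos hβ2 hδ2
    rw [← map_add, hsum', h2] at this
    simp at this
  · refine hind _ hβ1 _ hδ1 hβ2 hδ2 ?_
    rw [hsum', h3]; norm_num

/-- An additive functional positive on some positive root is positive on some simple root. -/
lemma exists_simple_pos (h : V →+ G) (φ : V →+ ℝ) :
    ∀ β ∈ Φ, 0 < h β → 0 < φ β → ∃ σ, Simple Φ h σ ∧ 0 < φ σ := by
  refine pos_induction h fun β hβ hpos ih hφ => ?_
  by_cases hs : Simple Φ h β
  · exact ⟨β, hs, hφ⟩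
  · simp only [Simple, not_and, not_forall, not_not] at hs
    obtain ⟨γ, hγ, δ, hδ, hγpos, hδpos, rfl⟩ := hs hβ hpos
    rw [map_add] at hφ
    rcases lt_or_ge 0 (φ γ) with h1 | h1
    · exact ih γ hγ hγpos (by rw [map_add]; exact lt_add_of_pos_right _ hδpos) h1
    · exact ih δ hδ hδpos (by rw [map_add]; exact lt_add_of_pos_left _ hγpos) (by linarith)

/-- Every reflection is a product of simple reflections. -/
lemma refl_eq_prod_simple (R : IsRootSys Φ c s) {h : V →+ G} (hne : ∀ γ ∈ Φ, h γ ≠ 0) :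
    ∀ β ∈ Φ, 0 < h β → ∃ l : List V, (∀ σ ∈ l, Simple Φ h σ) ∧ s β = (l.map s).prod := by
  refine pos_induction h fun β hβ hpos ih => ?_
  by_cases hs : Simple Φ h β
  · exact ⟨[β], by simpa using hs, by simp⟩
  -- some simple root `σ` has `(β, σ) > 0`, and then `s_σ β` is a smaller positive root
  obtain ⟨σ, hσ, hφ⟩ := exists_simple_pos (Φ := Φ) h
    (Complex.reAddGroupHom.comp (form Φ c β).toAddMonoidHom) β hβ hpos (by
      have := R.len_pos hβ
      simpa [R.len_cast hβ] using this)
  have hσΦ := hσ.1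
  have hpair : 0 < pair c σ β := by
    have h1 := R.two_form hσΦ β
    rw [R.pair_cast hσΦ hβ, R.len_cast hσΦ] at h1
    have h2 : 2 * (form Φ c β σ).re = (pair c σ β : ℝ) * (len Φ c σ : ℝ) := by
      have := congrArg Complex.re h1
      simpa using this
    have h3 : 0 < (form Φ c β σ).re := hφ
    have h4 : (0 : ℝ) < len Φ c σ := by exact_mod_cast R.len_pos hσΦ
    have h5 : (0 : ℝ) < pair c σ β := (mul_pos_iff_of_pos_right h4).mp (by linarith)
    exact_mod_cast h5
  have hβσ : β ≠ σ := fun h => hs (h ▸ hσ)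
  have hpos' := R.simple_refl_pos hne hσ hβ hpos hβσ
  have hlt : h (s σ β) < h β := by
    rw [R.refl σ hσΦ, R.pair_cast hσΦ hβ, Int.cast_smul_eq_zsmul, map_sub, map_zsmul]
    exact sub_lt_self _ (zsmul_pos hσ.2.1 hpair)
  obtain ⟨l, hl, hprod⟩ := ih _ (R.maps σ hσΦ β hβ) hpos' hlt
  refine ⟨σ :: (l ++ [σ]), ?_, ?_⟩
  · intro τ hτ
    simp only [List.mem_cons, List.mem_append, List.not_mem_nil, or_false] at hτ
    rcases hτ with rfl | hτ | rfl
    · exact hσ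
    · exact hl τ hτ
    · exact hσ
  · have h1 := R.refl_map (R.maps σ hσΦ) hβ
    simp only [List.map_cons, List.map_append, List.map_nil, List.prod_cons, List.prod_append,
      List.prod_nil, mul_one]
    rw [← hprod, h1, ← mul_assoc, R.refl_mul_self hσΦ, one_mul]

lemma weyl_eq_prod_simple (R : IsRootSys Φ c s) {h : V →+ G} (hne : ∀ γ ∈ Φ, h γ ≠ 0)
    {w : V ≃ₗ[ℂ] V} (hw : w ∈ Subgroup.closure (s '' (Φ : Set V))) :
    ∃ l : List V, (∀ σ ∈ l, Simple Φ h σ) ∧ w = (l.map s).prod := by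
  induction hw using Subgroup.closure_induction with
  | mem x hx =>
    obtain ⟨β, hβ, rfl⟩ := hx
    rcases lt_or_gt_of_ne (hne β hβ) with hneg | hpos
    · rw [← R.refl_neg hβ]
      exact R.refl_eq_prod_simple hne _ (R.neg_mem hβ) (by rw [map_neg]; exact neg_pos.mpr hneg)
    · exact R.refl_eq_prod_simple hne β hβ hpos
  | one => exact ⟨[], by simp, by simp⟩
  | mul x y _ _ hx hy =>
    obtain ⟨l, hl, rfl⟩ := hx
    obtain ⟨l', hl', rfl⟩ := hy
    refine ⟨l ++ l', fun σ hσ => ?_, by simp⟩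
    rcases List.mem_append.mp hσ with hσ | hσ
    · exact hl σ hσ
    · exact hl' σ hσ
  | inv x _ hx =>
    obtain ⟨l, hl, rfl⟩ := hx
    refine ⟨l.reverse, fun σ hσ => hl σ (List.mem_reverse.mp hσ), ?_⟩
    rw [List.prod_inv_reverse, List.map_map, List.map_reverse]
    congr 2
    exact List.map_congr_left fun σ hσ => R.refl_inv (hl σ hσ).1

lemma prod_mem (l : List V) (hl : ∀ σ ∈ l, σ ∈ Φ) :
    (l.map s).prod ∈ Subgroup.closure (s '' (Φ : Set V)) := by
  refine Subgroup.list_prod_mem _ fun x hx => ?_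
  obtain ⟨σ, hσ, rfl⟩ := List.mem_map.mp hx
  exact Subgroup.subset_closure ⟨σ, hl σ hσ, rfl⟩

/-- The exchange condition: if a word of simple reflections sends the simple root `σ` to a
negative root, then multiplying it by `s_σ` deletes a letter. -/
lemma exchange (R : IsRootSys Φ c s) {h : V →+ G} (hne : ∀ γ ∈ Φ, h γ ≠ 0) {σ : V}
    (hσ : Simple Φ h σ) : ∀ l : List V, (∀ τ ∈ l, Simple Φ h τ) → h ((l.map s).prod σ) < 0 →
      ∃ l' : List V, (∀ τ ∈ l', Simple Φ h τ) ∧ l'.length + 1 = l.length ∧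
        (l.map s).prod * s σ = (l'.map s).prod
  | [], _, hneg => absurd hσ.2.1 (not_lt.mpr (by simpa using hneg.le))
  | τ :: t, hl, hneg => by
    have hτ : Simple Φ h τ := hl τ (by simp)
    have ht : ∀ τ ∈ t, Simple Φ h τ := fun x hx => hl x (by simp [hx])
    have htW := R.weyl_maps (prod_mem (s := s) t fun x hx => (ht x hx).1)
    have hγ := htW σ hσ.1
    rw [List.map_cons, List.prod_cons] at hneg ⊢
    rcases lt_or_gt_of_ne (hne _ hγ) with h1 | h1
    · obtain ⟨t', ht', hlen, hprod⟩ := exchange R hne hσ t ht h1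
      refine ⟨τ :: t', ?_, by simp [hlen], ?_⟩
      · intro x hx
        rcases List.mem_cons.mp hx with rfl | hx
        · exact hτ
        · exact ht' x hx
      · rw [mul_assoc, hprod, List.map_cons, List.prod_cons]
    · have heq : (t.map s).prod σ = τ := by
        by_contra hne'
        exact lt_asymm hneg (R.simple_refl_pos hne hτ hγ h1 hne')
      refine ⟨t, ht, by simp, ?_⟩
      have h2 := R.refl_map htW hσ.1
      rw [heq] at h2
      rw [h2, mul_assoc, R.refl_mul_self hσ.1, mul_one]

/-- A Weyl group element preserving the positive system cut out by a functional nonzero on every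
root is the identity. -/
lemma eq_one_of_pos (R : IsRootSys Φ c s) {h : V →+ G} (hne : ∀ γ ∈ Φ, h γ ≠ 0)
    {w : V ≃ₗ[ℂ] V} (hw : w ∈ Subgroup.closure (s '' (Φ : Set V)))
    (hwpos : ∀ γ ∈ Φ, 0 < h γ → 0 < h (w γ)) : w = 1 := by
  obtain ⟨l, hl, hprod⟩ := R.weyl_eq_prod_simple hne hw
  induction hn : l.length using Nat.strong_induction_on generalizing l with
  | _ n ih =>
    rcases List.eq_nil_or_concat l with rfl | ⟨t, σ, rfl⟩
    · simpa using hprod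
    · have hσ : Simple Φ h σ := hl σ (by simp)
      have ht : ∀ τ ∈ t, Simple Φ h τ := fun x hx => hl x (by simp [hx])
      simp only [List.concat_eq_append, List.map_append, List.map_cons,
        List.map_nil, List.prod_append, List.prod_cons, List.prod_nil, mul_one] at hprod
      have hneg : h ((t.map s).prod σ) < 0 := by
        have h1 := hwpos σ hσ.1 hσ.2.1
        rw [hprod, LinearEquiv.mul_apply, R.refl_self hσ.1, map_neg, map_neg] at h1
        exact neg_pos.mp h1
      obtain ⟨t', ht', hlen, hprod'⟩ := R.exchange hne hσ t ht hneg
      refine ih t'.length ?_ t' ht' (hprod.trans hprod') rfl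
      simp at hn
      omega

end Free

/-! ### Half-sums of sign choices -/

lemma sum_coroot_eq_zero (R : IsRootSys Φ c s) {T : Finset V} {β : V} (hβ : β ∈ Φ)
    (hT : ∀ γ ∈ T, s β γ ∈ T) : ∑ γ ∈ T, c β γ = 0 := by
  refine Finset.sum_involution (fun γ _ => s β γ) ?_ ?_ hT ?_
  · intro γ _
    rw [R.coroot_refl hβ]; ring
  · intro γ _ hne heq
    rw [R.refl β hβ, sub_eq_self] at heq
    exact hne ((smul_eq_zero.mp heq).resolve_right (R.ne_zero hβ))
  · intro γ _
    exact R.refl_refl hβ γ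

/-- The half-sum of any choice of one root from each pair `{γ, -γ}` is a weight. Modulo `2`, the
pairings with `β∨` are invariant under `s_β` acting on the pairs `{γ, -γ}`, and the pairing is even
at a pair fixed by `s_β`. -/
lemma halfSum_mem (R : IsRootSys Φ c s) {P : Finset V} (hP : P ⊆ Φ)
    (hsplit : ∀ γ ∈ Φ, (γ ∈ P ↔ ¬ (-γ ∈ P))) {r : V} (hr : (2 : ℤ) • r = ∑ γ ∈ P, γ) :
    InWeightLattice Φ c r := by
  classical
  intro β hβ
  have hpn : ∀ γ ∈ Φ, (pair c β (-γ) : ZMod 2) = pair c β γ := by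
    intro γ hγ
    have : pair c β (-γ) = - pair c β γ := by
      have h1 := R.pair_cast hβ (R.neg_mem hγ)
      rw [map_neg, R.pair_cast hβ hγ] at h1
      exact_mod_cast h1.symm
    rw [this]; push_cast; exact ZMod.neg_eq_self_mod_two _
  have hps : ∀ γ ∈ Φ, (pair c β (s β γ) : ZMod 2) = pair c β γ := by
    intro γ hγ
    have : pair c β (s β γ) = - pair c β γ := by
      have h1 := R.pair_cast hβ (R.maps β hβ γ hγ)
      rw [R.coroot_refl hβ, R.pair_cast hβ hγ] at h1
      exact_mod_cast h1.symm
    rw [this]; push_cast; exact ZMod.neg_eq_self_mod_two _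
  have hsum : ∑ γ ∈ P, (pair c β γ : ZMod 2) = 0 := by
    refine Finset.sum_involution (fun γ _ => if s β γ ∈ P then s β γ else - s β γ) ?_ ?_ ?_ ?_
    · intro γ hγ
      have hΦ := R.maps β hβ γ (hP hγ)
      split_ifs
      · rw [hps γ (hP hγ)]; exact CharTwo.add_self_eq_zero _
      · rw [hpn _ hΦ, hps γ (hP hγ)]; exact CharTwo.add_self_eq_zero _
    · intro γ hγ hne heq
      apply hne
      have hcast := R.pair_cast hβ (hP hγ)
      split_ifs at heq with h
      · rw [R.refl β hβ, sub_eq_self] at heq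
        have h0 := (smul_eq_zero.mp heq).resolve_right (R.ne_zero hβ)
        rw [h0] at hcast
        have : pair c β γ = 0 := by exact_mod_cast hcast.symm
        rw [this]; simp
      · have hγβ : γ = (c β γ / 2) • β := by
          have h1 : (2 : ℂ) • γ = c β γ • β := by
            rw [R.refl β hβ] at heq
            rw [two_smul]; nth_rewrite 1 [← heq]; abel
          rw [div_eq_inv_mul, mul_smul, ← h1, smul_smul]; norm_num
        have hpm : c β γ = 2 ∨ c β γ = -2 := by
          rcases R.red β hβ (c β γ / 2) (by rw [← hγβ]; exact hP hγ) with h | h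
          · left; linear_combination 2 * h
          · right; linear_combination 2 * h
        rw [ZMod.intCast_zmod_eq_zero_iff_dvd _ 2]
        rcases hpm with h | h <;> rw [h] at hcast
        · have : pair c β γ = 2 := by exact_mod_cast hcast.symm
          simp [this]
        · have : pair c β γ = -2 := by exact_mod_cast hcast.symm
          simp [this]
    · intro γ hγ
      split_ifs with h
      · exact h
      · by_contra h'
        exact h ((hsplit _ (R.maps β hβ γ (hP hγ))).mpr h')
    · intro γ hγ
      have hneg : -γ ∉ P := (hsplit γ (hP hγ)).mp hγ
      by_cases h : s β γ ∈ P
      · simp [h, R.refl_refl hβ, hγ]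
      · simp [h, R.refl_refl hβ, hneg]
  rw [← Int.cast_sum, ZMod.intCast_zmod_eq_zero_iff_dvd _ 2] at hsum
  obtain ⟨n, hn⟩ := hsum
  refine ⟨n, ?_⟩
  have h1 := congrArg (c β) hr
  rw [map_zsmul, map_sum, Finset.sum_congr rfl fun γ hγ => R.pair_cast hβ (hP hγ),
    ← Int.cast_sum, hn] at h1
  simp only [zsmul_eq_mul] at h1
  push_cast at h1
  linear_combination h1 / 2

/-- Some weight takes the value `1` on `α∨`: the half-sum of a positive system in which `α` is
simple. The system is cut out by a functional vanishing on `α` and on no root other than `±α`. -/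
lemma exists_weight_one (R : IsRootSys Φ c s) {α : V} (hα : α ∈ Φ) :
    ∃ r : V, InWeightLattice Φ c r ∧ c α r = 1 := by
  classical
  obtain ⟨f, hfα, hf⟩ : ∃ f : V →ₗ[ℂ] ℂ, f α = 0 ∧
      ∀ γ ∈ Φ, γ ≠ α → γ ≠ -α → f γ ≠ 0 := by
    have : Finite {γ // γ ∈ Φ ∧ γ ≠ α ∧ γ ≠ -α} :=
      (Φ.finite_toSet.subset fun γ hγ => hγ.1 :
        {γ | γ ∈ Φ ∧ γ ≠ α ∧ γ ≠ -α}.Finite).to_subtype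
    obtain ⟨g, hg⟩ := Module.exists_dual_forall_apply_ne_zero (K := ℂ)
      (fun γ : {γ // γ ∈ Φ ∧ γ ≠ α ∧ γ ≠ -α} =>
        (Submodule.span ℂ {α}).mkQ γ.1) (by
        rintro ⟨γ, hγ, h1, h2⟩ h0
        rw [Submodule.mkQ_apply, Submodule.Quotient.mk_eq_zero,
          Submodule.mem_span_singleton] at h0
        obtain ⟨z, rfl⟩ := h0
        rcases R.red α hα z hγ with rfl | rfl
        · exact h1 (one_smul _ _)
        · exact h2 (by module))
    refine ⟨g.comp (Submodule.span ℂ {α}).mkQ, ?_, fun γ hγ h1 h2 => hg ⟨γ, hγ, h1, h2⟩⟩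
    have : (Submodule.span ℂ {α}).mkQ α = 0 := by
      simp [Submodule.mem_span_singleton_self]
    rw [LinearMap.comp_apply, this, map_zero]
  -- positivity for the lexicographic order on `ℂ = ℝ × ℝ`
  let lexpos : ℂ → Prop := fun z => 0 < z.re ∨ (z.re = 0 ∧ 0 < z.im)
  have hlex : ∀ z : ℂ, z ≠ 0 → (lexpos z ↔ ¬ lexpos (-z)) := by
    intro z hz
    simp only [lexpos, Complex.neg_re, Complex.neg_im]
    have : z.re ≠ 0 ∨ z.im ≠ 0 := by
      by_contra! h
      exact hz (Complex.ext h.1 h.2)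
    grind
  have hlex0 : ¬ lexpos 0 := by simp [lexpos]
  let T := Φ.filter fun γ => lexpos (f γ)
  have hαT : α ∉ T := by simp [T, hfα, hlex0]
  have hfs : ∀ γ, f (s α γ) = f γ := by
    intro γ
    rw [R.refl α hα, map_sub, map_smul, hfα]; simp
  have hα2 : -α ≠ α := fun h => R.ne_zero hα (by
    have : (2 : ℂ) • α = 0 := by rw [two_smul]; nth_rewrite 1 [← h]; abel
    exact (smul_eq_zero.mp this).resolve_left two_ne_zero)
  refine ⟨(2⁻¹ : ℂ) • ∑ γ ∈ insert α T, γ, ?_, ?_⟩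
  · refine R.halfSum_mem (P := insert α T) ?_ ?_ ?_
    · intro γ hγ
      rcases Finset.mem_insert.mp hγ with rfl | hγ
      · exact hα
      · exact (Finset.mem_filter.mp hγ).1
    · intro γ hγ
      have hnγ := R.neg_mem hγ
      by_cases h1 : γ = α
      · subst h1
        simp [T, hfα, hlex0, hα2]
      by_cases h2 : γ = -α
      · subst h2
        simp [T, hfα, hlex0, hα2]
      have h3 : -γ ≠ α := fun h => h2 (by rw [← h, neg_neg])
      simp only [Finset.mem_insert, h1, h3, false_or, T, Finset.mem_filter, hγ, hnγ, true_and,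
        map_neg]
      exact hlex _ (hf γ hγ h1 h2)
    · rw [← Int.cast_smul_eq_zsmul ℂ, smul_smul]; norm_num
  · rw [map_smul, map_sum, Finset.sum_insert hαT, R.two α hα,
      R.sum_coroot_eq_zero hα (T := T)]
    · norm_num
    · intro γ hγ
      have := Finset.mem_filter.mp hγ
      exact Finset.mem_filter.mpr ⟨R.maps α hα γ this.1, by rw [hfs]; exact this.2⟩

end IsRootSys

/-! ### The integral root system of a weight -/

/-- `Δ` is the set of simple roots, inside the sign choice `Φpos`, of the subsystem of roots of `Φ`
that are integral on `lam`. -/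
structure IsIntegralBase (Φ Φpos Δ : Finset V) (c : V → (V →ₗ[ℂ] ℂ)) (lam : V) : Prop where
  pos_sub : Φpos ⊆ Φ
  split : ∀ α ∈ Φ, (α ∈ Φpos ↔ ¬(-α ∈ Φpos))
  sub : ∀ α ∈ Δ, α ∈ Φ ∧ α ∈ Φpos ∧ ∃ n : ℤ, c α lam = (n : ℂ)
  ind : LinearIndependent ℂ (fun a : {x // x ∈ Δ} => (a : V))
  gen : ∀ β ∈ Φ, β ∈ Φpos → (∃ n : ℤ, c β lam = (n : ℂ)) →
      ∃ a : V → ℕ, β = ∑ α ∈ Δ, (a α : ℤ) • α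

namespace IsIntegralBase

variable {Φ Φpos Δ : Finset V} {c : V → (V →ₗ[ℂ] ℂ)} {s : V → (V ≃ₗ[ℂ] V)} {lam : V}

lemma coeff_zero (D : IsIntegralBase Φ Φpos Δ c lam) {f : V → ℤ}
    (hf : ∑ δ ∈ Δ, f δ • δ = 0) : ∀ δ ∈ Δ, f δ = 0 := by
  have h : LinearIndepOn ℂ (fun x : V => x) (Δ : Set V) := D.ind
  rw [linearIndepOn_finset_iff] at h
  intro δ hδ
  have := h (fun x => (f x : ℂ)) (by simpa only [Int.cast_smul_eq_zsmul] using hf) δ hδ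
  exact_mod_cast this

lemma integral_refl (R : IsRootSys Φ c s) {β γ : V} (hβ : β ∈ Φ) (hγ : γ ∈ Φ)
    (h1 : ∃ n : ℤ, c β lam = n) (h2 : ∃ n : ℤ, c γ lam = n) : ∃ n : ℤ, c (s β γ) lam = n := by
  obtain ⟨n, hn⟩ := h1
  obtain ⟨m, hm⟩ := h2
  obtain ⟨k, hk⟩ := R.crys γ hγ β hβ
  refine ⟨m - n * k, ?_⟩
  have h := R.coroot_map (R.maps β hβ) hγ (s β lam)
  rw [R.refl_refl hβ, R.refl β hβ lam, map_sub, map_smul, hn, hm, hk, smul_eq_mul] at h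
  rw [h]; push_cast; ring

lemma integral_neg (R : IsRootSys Φ c s) {γ : V} (hγ : γ ∈ Φ)
    (h : ∃ n : ℤ, c γ lam = n) : ∃ n : ℤ, c (-γ) lam = n := by
  obtain ⟨n, hn⟩ := h
  exact ⟨-n, by rw [R.coroot_neg hγ]; simp [hn]⟩

/-- A root that is a natural combination of `Δ` supported at one simple root is that root. -/
lemma eq_of_support (R : IsRootSys Φ c s) (D : IsIntegralBase Φ Φpos Δ c lam) {β γ : V}
    (hβ : β ∈ Δ) (hγ : γ ∈ Φ) {a : V → ℕ} (ha : γ = ∑ δ ∈ Δ, (a δ : ℤ) • δ)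
    (h0 : ∀ δ ∈ Δ, δ ≠ β → a δ = 0) : γ = β := by
  have h1 : γ = (a β : ℂ) • β := by
    rw [ha, Finset.sum_eq_single_of_mem β hβ fun δ hδ hne => by rw [h0 δ hδ hne]; simp]
    simp [Nat.cast_smul_eq_nsmul]
  rcases R.red β (D.sub β hβ).1 (a β) (by rw [← h1]; exact hγ) with h | h
  · rw [h1, h, one_smul]
  · exfalso
    have h2 : (a β : ℝ) = -1 := by
      have := congrArg Complex.re h
      simpa using this
    have h3 : (0 : ℝ) ≤ a β := Nat.cast_nonneg _
    linarith

/-- A simple reflection permutes the positive integral roots other than its own root. -/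
lemma refl_pos (R : IsRootSys Φ c s) (D : IsIntegralBase Φ Φpos Δ c lam) {β γ : V}
    (hβ : β ∈ Δ) (hγ : γ ∈ Φpos) (hinteg : ∃ n : ℤ, c γ lam = n) (hne : γ ≠ β) :
    s β γ ∈ Φpos := by
  classical
  have hγΦ := D.pos_sub hγ
  obtain ⟨hβΦ, _, hβint⟩ := D.sub β hβ
  by_contra hcon
  have hsΦ := R.maps β hβΦ γ hγΦ
  have hneg : - s β γ ∈ Φpos := by
    by_contra h
    exact hcon ((D.split _ hsΦ).mpr h)
  obtain ⟨a, ha⟩ := D.gen γ hγΦ hγ hinteg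
  obtain ⟨b, hb⟩ := D.gen _ (R.neg_mem hsΦ) hneg
    (integral_neg R hsΦ (integral_refl R hβΦ hγΦ hβint hinteg))
  refine hne (D.eq_of_support R hβ hγΦ ha fun δ hδ hδβ => ?_)
  have hrel : ∑ δ ∈ Δ, ((a δ : ℤ) + b δ - if δ = β then IsRootSys.pair c β γ else 0) • δ = 0 := by
    simp only [sub_smul, add_smul, Finset.sum_sub_distrib, Finset.sum_add_distrib, ite_smul,
      zero_smul, Finset.sum_ite_eq', hβ, if_true]
    rw [← ha, ← hb, R.refl β hβΦ, R.pair_cast hβΦ hγΦ, Int.cast_smul_eq_zsmul]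
    abel
  have := D.coeff_zero hrel δ hδ
  rw [if_neg hδβ] at this
  omega

lemma pair_nonpos (R : IsRootSys Φ c s) (D : IsIntegralBase Φ Φpos Δ c lam) {α β : V}
    (hα : α ∈ Δ) (hβ : β ∈ Δ) (hne : α ≠ β) : IsRootSys.pair c β α ≤ 0 := by
  classical
  obtain ⟨hβΦ, _, hβint⟩ := D.sub β hβ
  obtain ⟨hαΦ, hαpos, hαint⟩ := D.sub α hα
  obtain ⟨b, hb⟩ := D.gen _ (R.maps β hβΦ α hαΦ) (D.refl_pos R hβ hαpos hαint hne)
    (integral_refl R hβΦ hαΦ hβint hαint)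
  have hrel : ∑ δ ∈ Δ, ((b δ : ℤ) + (if δ = β then IsRootSys.pair c β α else 0)
      - if δ = α then 1 else 0) • δ = 0 := by
    simp only [sub_smul, add_smul, Finset.sum_sub_distrib, Finset.sum_add_distrib, ite_smul,
      zero_smul, Finset.sum_ite_eq', hβ, hα, if_true]
    rw [← hb, R.refl β hβΦ, R.pair_cast hβΦ hαΦ, Int.cast_smul_eq_zsmul]
    simp
  have := D.coeff_zero hrel β hβ
  rw [if_pos rfl, if_neg hne.symm] at this
  omega

/-- The sum of the positive integral roots other than `α` is orthogonal to `α∨` and positive on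
the remaining simple coroots. -/
lemma exists_theta (R : IsRootSys Φ c s) (D : IsIntegralBase Φ Φpos Δ c lam) {α : V}
    (hα : α ∈ Δ) : ∃ θ : V, InWeightLattice Φ c θ ∧ c α θ = 0 ∧
      ∀ β ∈ Δ, β ≠ α → ∃ n : ℤ, 0 < n ∧ c β θ = n := by
  classical
  let T := Φpos.filter fun γ => ∃ n : ℤ, c γ lam = n
  have hΔT : ∀ β ∈ Δ, β ∈ T := fun β hβ =>
    Finset.mem_filter.mpr ⟨(D.sub β hβ).2.1, (D.sub β hβ).2.2⟩
  have hzero : ∀ β ∈ Δ, ∑ γ ∈ T.erase β, c β γ = 0 := by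
    intro β hβ
    obtain ⟨hβΦ, hβpos, hβint⟩ := D.sub β hβ
    refine R.sum_coroot_eq_zero hβΦ fun γ hγ => ?_
    obtain ⟨hne, hγT⟩ := Finset.mem_erase.mp hγ
    obtain ⟨hγ, hinteg⟩ := Finset.mem_filter.mp hγT
    have hpos := D.refl_pos R hβ hγ hinteg hne
    refine Finset.mem_erase.mpr ⟨fun h => ?_, Finset.mem_filter.mpr
      ⟨hpos, integral_refl R hβΦ (D.pos_sub hγ) hβint hinteg⟩⟩
    have h1 : γ = -β := by rw [← R.refl_self hβΦ, ← congrArg (s β) h, R.refl_refl hβΦ]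
    exact (D.split β hβΦ).mp hβpos (h1 ▸ hγ)
  refine ⟨∑ γ ∈ T.erase α, γ, ?_, ?_, ?_⟩
  · intro β hβ
    refine ⟨∑ γ ∈ T.erase α, IsRootSys.pair c β γ, ?_⟩
    rw [map_sum, Int.cast_sum]
    refine Finset.sum_congr rfl fun γ hγ => R.pair_cast hβ (D.pos_sub ?_)
    exact (Finset.mem_filter.mp (Finset.mem_of_mem_erase hγ)).1
  · rw [map_sum, hzero α hα]
  · intro β hβ hne
    refine ⟨2 - IsRootSys.pair c β α, ?_, ?_⟩
    · have := D.pair_nonpos R hα hβ hne.symm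
      omega
    · have h1 := Finset.add_sum_erase T (c β) (hΔT β hβ)
      have h2 := Finset.add_sum_erase T (c β) (hΔT α hα)
      rw [hzero β hβ, R.two β (D.sub β hβ).1] at h1
      rw [R.pair_cast (D.sub β hβ).1 (D.sub α hα).1] at h2
      rw [map_sum]; push_cast
      linear_combination h2 - h1

/-- Some element of `lam + Λ` is orthogonal to `α∨` and positive on the other simple coroots. -/
lemma exists_nu (R : IsRootSys Φ c s) (D : IsIntegralBase Φ Φpos Δ c lam) {α : V}
    (hα : α ∈ Δ) : ∃ ν : V, InWeightLattice Φ c (ν - lam) ∧ c α ν = 0 ∧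
      ∀ β ∈ Δ, β ≠ α → ∃ n : ℤ, 0 < n ∧ c β ν = n := by
  obtain ⟨hαΦ, hαpos, m, hm⟩ := D.sub α hα
  obtain ⟨r, hr, hr1⟩ := R.exists_weight_one hαΦ
  obtain ⟨θ, hθ, hθ0, hθpos⟩ := D.exists_theta R hα
  have hq : ∀ β : V, ∃ q : ℤ, β ∈ Δ → c β (lam - m • r) = q := by
    intro β
    by_cases hβ : β ∈ Δ
    · obtain ⟨hβΦ, _, n, hn⟩ := D.sub β hβ
      obtain ⟨k, hk⟩ := hr β hβΦ
      exact ⟨n - m * k, fun _ => by rw [map_sub, map_zsmul, hn, hk]; simp⟩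
    · exact ⟨0, fun h => absurd h hβ⟩
  choose q hq using hq
  -- `N` exceeds `|⟨lam - m r, β∨⟩|` for every simple `β`
  let N : ℤ := ∑ β ∈ Δ, |q β| + 1
  refine ⟨lam - m • r + N • θ, ?_, ?_, ?_⟩
  · intro β hβ
    obtain ⟨k, hk⟩ := hr β hβ
    obtain ⟨j, hj⟩ := hθ β hβ
    refine ⟨-(m * k) + N * j, ?_⟩
    rw [show lam - m • r + N • θ - lam = -(m • r) + N • θ by abel, map_add, map_neg, map_zsmul,
      map_zsmul, hk, hj]
    simp
  · rw [map_add, map_sub, map_zsmul, map_zsmul, hm, hr1, hθ0]; simp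
  · intro β hβ hne
    obtain ⟨j, hj0, hj⟩ := hθpos β hβ hne
    refine ⟨q β + N * j, ?_, ?_⟩
    · have h1 : |q β| ≤ ∑ β ∈ Δ, |q β| :=
        Finset.single_le_sum (f := fun β => |q β|) (fun _ _ => abs_nonneg _) hβ
      have h2 : -|q β| ≤ q β := neg_abs_le _
      have h3 : |q β| + 1 ≤ N := by simp only [N]; omega
      have h4 := abs_nonneg (q β)
      nlinarith
    · rw [map_add, map_zsmul, hq β hβ, hj]; simp

/-- A vector orthogonal to `α∨` and positive on the other simple coroots is nonnegative on every
positive integral coroot, and vanishes only on `α∨`. -/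
lemma coroot_nonneg (R : IsRootSys Φ c s) (D : IsIntegralBase Φ Φpos Δ c lam) {α ν : V}
    (hα : α ∈ Δ) (h0 : c α ν = 0) (hpos : ∀ β ∈ Δ, β ≠ α → ∃ n : ℤ, 0 < n ∧ c β ν = n)
    {γ : V} (hγ : γ ∈ Φpos) (hinteg : ∃ n : ℤ, c γ lam = n) :
    ∃ t : ℝ, c γ ν = t ∧ 0 ≤ t ∧ (t = 0 → γ = α) := by
  have hγΦ := D.pos_sub hγ
  obtain ⟨a, ha⟩ := D.gen γ hγΦ hγ hinteg
  have hn : ∀ β : V, ∃ n : ℤ, β ∈ Δ → (c β ν = n ∧ 0 ≤ n ∧ (β ≠ α → 0 < n)) := by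
    intro β
    by_cases hβ : β ∈ Δ
    · by_cases hne : β = α
      · exact ⟨0, fun _ => ⟨by simp [hne, h0], le_rfl, fun h => absurd hne h⟩⟩
      · obtain ⟨n, hn, hc⟩ := hpos β hβ hne
        exact ⟨n, fun _ => ⟨hc, hn.le, fun _ => hn⟩⟩
    · exact ⟨0, fun h => absurd h hβ⟩
  choose n hn using hn
  let Z : ℤ := ∑ δ ∈ Δ, a δ * (n δ * IsRootSys.len Φ c δ)
  have hterm : ∀ δ ∈ Δ, 0 ≤ a δ * (n δ * IsRootSys.len Φ c δ) := fun δ hδ =>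
    mul_nonneg (by positivity) (mul_nonneg (hn δ hδ).2.1 (R.len_pos (D.sub δ hδ).1).le)
  have hlen := R.len_pos hγΦ
  have hlen' : (0 : ℝ) < IsRootSys.len Φ c γ := by exact_mod_cast hlen
  have hZ : c γ ν * (IsRootSys.len Φ c γ : ℂ) = (Z : ℂ) := by
    rw [← R.len_cast hγΦ, ← R.two_form hγΦ]
    rw [congrArg (IsRootSys.form Φ c ν) ha, map_sum, Finset.mul_sum]
    simp only [Z]
    rw [Int.cast_sum]
    refine Finset.sum_congr rfl fun δ hδ => ?_
    have h1 := R.two_form (D.sub δ hδ).1 ν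
    rw [(hn δ hδ).1, R.len_cast (D.sub δ hδ).1] at h1
    rw [map_zsmul, zsmul_eq_mul]
    push_cast
    linear_combination (a δ : ℂ) * h1
  refine ⟨Z / IsRootSys.len Φ c γ, ?_, ?_, ?_⟩
  · push_cast
    rw [eq_div_iff (by exact_mod_cast hlen.ne'), hZ]
  · have : (0 : ℝ) ≤ Z := by exact_mod_cast Finset.sum_nonneg hterm
    positivity
  · intro hz
    have hZ0 : Z = 0 := by
      rcases div_eq_zero_iff.mp hz with h | h
      · exact_mod_cast h
      · exact absurd h hlen'.ne'
    refine D.eq_of_support R hα hγΦ ha fun δ hδ hne => ?_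
    have h1 := (Finset.sum_eq_zero_iff_of_nonneg hterm).mp hZ0 δ hδ
    have h2 := (hn δ hδ).2.2 hne
    have h3 := R.len_pos (D.sub δ hδ).1
    rcases mul_eq_zero.mp h1 with h | h
    · exact_mod_cast h
    · exact absurd h (mul_pos h2 h3).ne'

end IsIntegralBase

/-! ### Stabilizers -/

/-- If `±α` are the only roots whose coroots vanish on `ν`, then a Weyl group element fixing `ν`
and `α` is trivial. The functional `(Re (ν,·), Im (ν,·), Re (α,·))` with values in lexicographically
ordered triples is invariant under `w` and nonzero on every root. -/
lemma IsRootSys.eq_one_of_fixed {Φ : Finset V} {c : V → (V →ₗ[ℂ] ℂ)} {s : V → (V ≃ₗ[ℂ] V)}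
    (R : IsRootSys Φ c s) {α ν : V} (hα : α ∈ Φ)
    (hν : ∀ γ ∈ Φ, c γ ν = 0 → γ = α ∨ γ = -α) {w : V ≃ₗ[ℂ] V}
    (hw : w ∈ Subgroup.closure (s '' (Φ : Set V))) (h1 : w ν = ν) (h2 : w α = α) : w = 1 := by
  let h : V →+ ℝ ×ₗ (ℝ ×ₗ ℝ) :=
    { toFun := fun x => toLex ((form Φ c ν x).re, toLex ((form Φ c ν x).im, (form Φ c α x).re))
      map_zero' := by simp
      map_add' := fun x y => by simp; rfl }
  have hmaps := R.weyl_maps hw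
  have hinv : ∀ x, h (w x) = h x := by
    intro x
    have e1 := R.form_map hmaps ν x
    have e2 := R.form_map hmaps α x
    rw [h1] at e1
    rw [h2] at e2
    change toLex (_, toLex (_, _)) = toLex (_, toLex (_, _))
    rw [e1, e2]
  have hne : ∀ γ ∈ Φ, h γ ≠ 0 := by
    intro γ hγ h0
    have e1 : (form Φ c ν γ).re = 0 := congrArg (fun z => (ofLex z).1) h0
    have e2 : (form Φ c ν γ).im = 0 := congrArg (fun z => (ofLex (ofLex z).2).1) h0
    have e3 : (form Φ c α γ).re = 0 := congrArg (fun z => (ofLex (ofLex z).2).2) h0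
    have e4 : form Φ c ν γ = 0 := Complex.ext e1 e2
    have e5 := R.two_form hγ ν
    rw [e4, mul_zero, R.len_cast hγ] at e5
    have e6 : c γ ν = 0 := (mul_eq_zero.mp e5.symm).resolve_right
      (by exact_mod_cast (R.len_pos hγ).ne')
    have e7 : (form Φ c α α).re ≠ 0 := by
      rw [R.len_cast hα]
      simpa using (R.len_pos hα).ne'
    rcases hν γ hγ e6 with rfl | rfl
    · exact e7 e3
    · rw [map_neg, Complex.neg_re, neg_eq_zero] at e3
      exact e7 e3
  exact R.eq_one_of_pos hne hw fun γ _ hpos => by rwa [hinv]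

/-- Let `λ ∈ 𝔥*` and let `α ∈ Δ_[λ]` be a simple root of the integral root
system `Φ_[λ] = {α ∈ Φ : ⟨λ, α∨⟩ ∈ ℤ}`.  Then there exists a dominant weight `μ ∈ λ + Λ`
whose stabilizer in `W` under the dot action is exactly the two-element subgroup `{1, s_α}`.

Setting: `Φ` is a finite reduced crystallographic root system in `V` with positive system
`Φpos`, half-sum of positive roots `ρ`, coroot pairing `coroot`, reflections `s`, and Weyl
group `W`.  `Δ` is the unique system of simple roots of `Φ_[λ]` contained in `Φ⁺`, recorded by
the hypotheses: `Δ` consists of positive roots of `Φ_[λ]`, is linearly independent, and every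
positive root of `Φ_[λ]` is a nonnegative integral combination of `Δ`. -/
theorem exists_dominant_weight_with_stabilizer_simple_reflection
    (Φ Φpos Δ : Finset V) (coroot : V → (V →ₗ[ℂ] ℂ)) (s : V → (V ≃ₗ[ℂ] V))
    (W : Subgroup (V ≃ₗ[ℂ] V)) (ρ : V)
    (hΦ0 : (0 : V) ∉ Φ)
    (hspan : Submodule.span ℂ (Φ : Set V) = ⊤)
    (h2 : ∀ α ∈ Φ, coroot α α = 2)
    (hred : ∀ α ∈ Φ, ∀ c : ℂ, c • α ∈ (Φ : Set V) → c = 1 ∨ c = -1)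
    (hcrys : ∀ α ∈ Φ, ∀ β ∈ Φ, ∃ n : ℤ, coroot α β = (n : ℂ))
    (hs : ∀ α ∈ Φ, ∀ x : V, s α x = x - coroot α x • α)
    (hsΦ : ∀ α ∈ Φ, ∀ β ∈ Φ, s α β ∈ Φ)
    (hW : W = Subgroup.closure (s '' (Φ : Set V)))
    (hpos : Φpos ⊆ Φ)
    (hsplit : ∀ α ∈ Φ, (α ∈ Φpos ↔ ¬(-α ∈ Φpos)))
    (hρ : (2 : ℤ) • ρ = ∑ α ∈ Φpos, α)
    (lam : V)
    -- `Δ` is the system of simple roots of `Φ_[λ]` contained in `Φ⁺`: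
    (hΔsub : ∀ α ∈ Δ, α ∈ Φ ∧ α ∈ Φpos ∧ ∃ n : ℤ, coroot α lam = (n : ℂ))
    (hΔind : LinearIndependent ℂ (fun a : {x // x ∈ Δ} => (a : V)))
    (hΔgen : ∀ β ∈ Φ, β ∈ Φpos → (∃ n : ℤ, coroot β lam = (n : ℂ)) →
      ∃ c : V → ℕ, β = ∑ α ∈ Δ, (c α : ℤ) • α)
    -- an arbitrary element `α` of `Δ_[λ]`:
    (α : V) (hα : α ∈ Δ) :
    ∃ μ : V,
      InWeightLattice Φ coroot (μ - lam) ∧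
      IsDominant Φpos coroot ρ μ ∧
      (∀ w ∈ W, dotAct ρ w μ = μ ↔ (w = 1 ∨ w = s α)) := by
  have R : IsRootSys Φ coroot s := ⟨hspan, h2, hred, hcrys, hs, hsΦ⟩
  have D : IsIntegralBase Φ Φpos Δ coroot lam := ⟨hpos, hsplit, hΔsub, hΔind, hΔgen⟩
  have hρΛ := R.halfSum_mem hpos hsplit hρ
  obtain ⟨hαΦ, hαpos, -⟩ := hΔsub α hα
  obtain ⟨ν, hνΛ, hν0, hνpos⟩ := D.exists_nu R hα
  -- roots integral on `ν` are integral on `lam`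
  have hinteg : ∀ γ ∈ Φ, (∃ n : ℤ, coroot γ ν = n) → ∃ n : ℤ, coroot γ lam = n := by
    rintro γ hγ ⟨n, hn⟩
    obtain ⟨m, hm⟩ := hνΛ γ hγ
    refine ⟨n - m, ?_⟩
    rw [map_sub, hn] at hm
    push_cast
    linear_combination -hm
  have hzero_pos : ∀ γ ∈ Φpos, coroot γ ν = 0 → γ = α := by
    intro γ hγ h0
    obtain ⟨t, ht, -, ht0⟩ := D.coroot_nonneg R hα hν0 hνpos hγ
      (hinteg γ (hpos hγ) ⟨0, by simpa using h0⟩)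
    refine ht0 ?_
    rw [h0] at ht
    exact_mod_cast ht.symm
  have hzero : ∀ γ ∈ Φ, coroot γ ν = 0 → γ = α ∨ γ = -α := by
    intro γ hγ h0
    by_cases hp : γ ∈ Φpos
    · exact Or.inl (hzero_pos γ hp h0)
    · have hn : -γ ∈ Φpos := by
        by_contra h
        exact hp ((hsplit γ hγ).mpr h)
      have := hzero_pos _ hn (by rw [R.coroot_neg hγ, LinearMap.neg_apply, h0, neg_zero])
      exact Or.inr (by rw [← this, neg_neg])
  have hsν : s α ν = ν := by rw [hs α hαΦ, hν0, zero_smul, sub_zero]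
  refine ⟨ν - ρ, ?_, ?_, ?_⟩
  · intro γ hγ
    obtain ⟨n, hn⟩ := hνΛ γ hγ
    obtain ⟨m, hm⟩ := hρΛ γ hγ
    refine ⟨n - m, ?_⟩
    rw [show ν - ρ - lam = (ν - lam) - ρ by abel, map_sub, hn, hm]
    push_cast; ring
  · intro γ hγ n hn h
    rw [sub_add_cancel] at h
    obtain ⟨t, ht, ht0, -⟩ := D.coroot_nonneg R hα hν0 hνpos hγ (hinteg γ (hpos hγ) ⟨n, h⟩)
    rw [h] at ht
    have h1 : (n : ℝ) = t := by exact_mod_cast ht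
    have h2 : (n : ℝ) < 0 := by exact_mod_cast hn
    linarith
  · intro w hw
    rw [hW] at hw
    have hdot : dotAct ρ w (ν - ρ) = ν - ρ ↔ w ν = ν := by
      simp [dotAct]
    rw [hdot]
    constructor
    · intro hwν
      have hmaps := R.weyl_maps hw
      have h0 : coroot (w α) ν = 0 := by
        have := R.coroot_map hmaps hαΦ ν
        rwa [hwν, hν0] at this
      rcases hzero _ (hmaps α hαΦ) h0 with h | h
      · exact Or.inl (R.eq_one_of_fixed hαΦ hzero hw hwν h)
      · right
        have h1 : s α * w = 1 := by
          refine R.eq_one_of_fixed hαΦ hzero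
            (mul_mem (Subgroup.subset_closure ⟨α, hαΦ, rfl⟩) hw) ?_ ?_
          · rw [LinearEquiv.mul_apply, hwν, hsν]
          · rw [LinearEquiv.mul_apply, h, map_neg, R.refl_self hαΦ, neg_neg]
        rw [← inv_eq_of_mul_eq_one_right h1, R.refl_inv hαΦ]
    · rintro (rfl | rfl)
      · rfl
      · exact hsν

end
end

section
/- Let λ ∈ 𝔥* and let α ∈ Δ_[λ] be a simple root of the integral root system Φ_[λ]. Then there exists δ ∈ Λ such that ⟨δ, α∨⟩ = 0 and ⟨δ, β∨⟩ > 0 for every β ∈ Δ_[λ] with β ≠ α. -/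
/-!
The vector `δ` is found inside the root lattice `∑ γ ∈ Δ, ℤ γ`, which lies in `Λ` because `Φ` is
crystallographic.  Writing `δ = ∑ γ ∈ Δ, x γ • γ`, the numbers `⟨δ, β∨⟩` for `β ∈ Δ` are the
entries of `A x`, where `A = (⟨γ, β∨⟩)` is an integer square matrix.  If `det A ≠ 0`, then
`x = det A • adj A (u)`, with `u` the indicator vector of `Δ \ {α}`, gives `A x = (det A)² • u`,
as required.

That `det A ≠ 0` holds because `Δ` is linearly independent and the canonical form
`B(x, y) = ∑ γ ∈ Φ, ⟨x, γ∨⟩⟨y, γ∨⟩` is Weyl invariant and positive definite on the root lattice: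
if `v = ∑ γ ∈ Δ, x γ • γ` is killed by all `β∨` with `β ∈ Δ`, then
`2 B(β, v) = B(β, β) ⟨v, β∨⟩ = 0` for these `β`, so `B(v, v) = 0` and `v = 0`
(`eq_zero_of_coroot'_eq_zero`).  The facts about `B` come from Mathlib's `RootPairing`, so the data
`(Φ, coroot)` is repackaged as such (`eq_zero_of_coroot_eq_zero`).
-/

noncomputable section

variable {V : Type*} [AddCommGroup V] [Module ℂ V]

/-- In a crystallographic root pairing, an integral combination of some of the roots that is
orthogonal to the corresponding coroots vanishes, by positivity of the canonical form. -/
lemma eq_zero_of_coroot'_eq_zero {ι M N : Type*} [Fintype ι] [AddCommGroup M] [Module ℂ M]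
    [AddCommGroup N] [Module ℂ N] (P : RootPairing ι ℂ M N) [P.IsCrystallographic]
    (t : Finset ι) (x : ι → ℤ)
    (h : ∀ i ∈ t, P.coroot' i (∑ j ∈ t, x j • P.root j) = 0) :
    ∑ j ∈ t, x j • P.root j = 0 := by
  set v := ∑ j ∈ t, x j • P.root j with hv
  have hmem : v ∈ P.rootSpan ℤ :=
    Submodule.sum_mem _ fun j _ => Submodule.smul_mem _ _ (Submodule.subset_span ⟨j, rfl⟩)
  have hroot : ∀ i ∈ t, P.RootForm (P.root i) v = 0 := by
    intro i hi
    have key := congrArg (P.toLinearMap v) (P.rootForm_self_smul_coroot i)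
    have hi' : P.toLinearMap v (P.coroot i) = 0 := h i hi
    rw [map_smul, map_nsmul, P.toLinearMap_apply_apply_Polarization, hi', smul_zero] at key
    simpa using key.symm
  have hvv : P.RootForm v v = 0 := by
    have hle : v ∈ Submodule.span ℂ (P.root '' t) :=
      Submodule.sum_mem _ fun j hj =>
        zsmul_mem (Submodule.subset_span (Set.mem_image_of_mem _ hj)) _
    have hker : Submodule.span ℂ (P.root '' t) ≤ LinearMap.ker (P.RootForm.flip v) := by
      rw [Submodule.span_le]
      rintro _ ⟨i, hi, rfl⟩
      exact hroot i hi
    exact hker hle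
  by_contra hne
  have hpos := P.posRootForm_posForm_pos_of_ne_zero ℤ (x := ⟨v, hmem⟩)
    (fun h0 => hne (congrArg Subtype.val h0))
  have := P.algebraMap_posRootForm_posForm ℤ ⟨v, hmem⟩ ⟨v, hmem⟩
  rw [show P.RootForm _ _ = 0 from hvv] at this
  simp only [algebraMap_int_eq, eq_intCast, Int.cast_eq_zero] at this
  exact hpos.ne' this

/-- The same statement for a root system given by a finite set `Φ` and a coroot map. -/
lemma eq_zero_of_coroot_eq_zero (Φ Δ : Finset V) (coroot : V → (V →ₗ[ℂ] ℂ))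
    (hspan : Submodule.span ℂ (Φ : Set V) = ⊤)
    (h2 : ∀ α ∈ Φ, coroot α α = 2)
    (hcrys : ∀ α ∈ Φ, ∀ β ∈ Φ, ∃ n : ℤ, coroot α β = (n : ℂ))
    (hsΦ : ∀ α ∈ Φ, ∀ β ∈ Φ, β - coroot α β • α ∈ Φ)
    (hΔ : Δ ⊆ Φ) (x : V → ℤ)
    (h : ∀ β ∈ Δ, coroot β (∑ γ ∈ Δ, x γ • γ) = 0) :
    ∑ γ ∈ Δ, x γ • γ = 0 := by
  classical
  have : Module.Finite ℂ V := ⟨⟨Φ, hspan⟩⟩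
  have : IsAddTorsionFree V := .of_isTorsionFree ℂ V
  have hmaps : ∀ a ∈ Φ, Set.MapsTo (Module.preReflection a (coroot a)) (Φ : Set V) Φ := by
    intro a ha b hb
    simpa [Module.preReflection_apply] using hsΦ a ha b hb
  -- Two roots with the same coroot are equal: otherwise the product of their reflections
  -- would have an infinite orbit in `Φ`.
  have hinj : Function.Injective (fun a : {a // a ∈ Φ} => coroot a) := by
    rintro ⟨a, ha⟩ ⟨b, hb⟩ (hab : coroot a = coroot b)
    refine Subtype.ext ?_
    exact Module.eq_of_mapsTo_reflection_of_mem Φ.finite_toSet (h2 a ha) (h2 b hb)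
      (by rw [← hab]; exact h2 a ha) (by rw [hab]; exact h2 b hb) (hmaps a ha) (hmaps b hb) hb
  have hrange : Set.range (Function.Embedding.subtype fun a => a ∈ Φ) = (Φ : Set V) := by
    ext; simp
  let P : RootPairing {a // a ∈ Φ} ℂ V (Module.Dual ℂ V) :=
    RootPairing.mk'' (Module.Dual.eval ℂ V) (Function.Embedding.subtype _)
      ⟨fun a => coroot a, hinj⟩ (fun a => h2 a a.2)
      (fun a => by rw [hrange]; exact hmaps a a.2) (by rw [hrange]; exact hspan)
  have : P.IsCrystallographic := ⟨fun i j => by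
    obtain ⟨n, hn⟩ := hcrys j j.2 i i.2
    exact ⟨n, hn.symm⟩⟩
  have hsum : ∑ j ∈ Δ.subtype (· ∈ Φ), x j • P.root j = ∑ γ ∈ Δ, x γ • γ :=
    Finset.sum_subtype_of_mem (fun γ => x γ • γ) hΔ
  rw [← hsum]
  refine eq_zero_of_coroot'_eq_zero P _ (fun j => x j) fun i hi => ?_
  rw [hsum]
  exact h i (Finset.mem_subtype.mp hi)

/-- Let `λ ∈ 𝔥*` and let `α ∈ Δ_[λ]` be a simple root of the integral root
system `Φ_[λ] = {α ∈ Φ : ⟨λ, α∨⟩ ∈ ℤ}`.  Then there exists `δ ∈ Λ` such that `⟨δ, α∨⟩ = 0`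
and `⟨δ, β∨⟩ > 0` for every `β ∈ Δ_[λ]` with `β ≠ α`.

Setting: `Φ` is a finite reduced crystallographic root system in `V` with positive system
`Φpos`, coroot pairing `coroot`, reflections `s`, and Weyl group `W`; `Λ` is the weight
lattice (membership recorded by `InWeightLattice Φ coroot`).  `Δ` is the unique system of
simple roots of `Φ_[λ]` contained in `Φ⁺`, recorded by the hypotheses below.  Since `δ ∈ Λ`
and `β ∈ Φ_[λ]`, the pairing `⟨δ, β∨⟩` is an integer, and positivity is expressed by saying
that it is a positive integer. -/
theorem exists_weight_orthogonal_to_one_simple_root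
    (Φ Φpos Δ : Finset V) (coroot : V → (V →ₗ[ℂ] ℂ)) (s : V → (V ≃ₗ[ℂ] V))
    (W : Subgroup (V ≃ₗ[ℂ] V))
    (hΦ0 : (0 : V) ∉ Φ)
    (hspan : Submodule.span ℂ (Φ : Set V) = ⊤)
    (h2 : ∀ α ∈ Φ, coroot α α = 2)
    (hred : ∀ α ∈ Φ, ∀ c : ℂ, c • α ∈ (Φ : Set V) → c = 1 ∨ c = -1)
    (hcrys : ∀ α ∈ Φ, ∀ β ∈ Φ, ∃ n : ℤ, coroot α β = (n : ℂ))
    (hs : ∀ α ∈ Φ, ∀ x : V, s α x = x - coroot α x • α)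
    (hsΦ : ∀ α ∈ Φ, ∀ β ∈ Φ, s α β ∈ Φ)
    (hW : W = Subgroup.closure (s '' (Φ : Set V)))
    (hpos : Φpos ⊆ Φ)
    (hsplit : ∀ α ∈ Φ, (α ∈ Φpos ↔ ¬(-α ∈ Φpos)))
    (lam : V)
    -- `Δ` is the system of simple roots of `Φ_[λ]` contained in `Φ⁺`:
    (hΔsub : ∀ α ∈ Δ, α ∈ Φ ∧ α ∈ Φpos ∧ ∃ n : ℤ, coroot α lam = (n : ℂ))
    (hΔind : LinearIndependent ℂ (fun a : {x // x ∈ Δ} => (a : V)))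
    (hΔgen : ∀ β ∈ Φ, β ∈ Φpos → (∃ n : ℤ, coroot β lam = (n : ℂ)) →
      ∃ c : V → ℕ, β = ∑ α ∈ Δ, (c α : ℤ) • α)
    -- an arbitrary element `α` of `Δ_[λ]`:
    (α : V) (hα : α ∈ Δ) :
    ∃ δ : V,
      InWeightLattice Φ coroot δ ∧
      coroot α δ = 0 ∧
      (∀ β ∈ Δ, β ≠ α → ∃ n : ℤ, 0 < n ∧ coroot β δ = (n : ℂ)) := by
  classical
  have hΔ : Δ ⊆ Φ := fun β hβ => (hΔsub β hβ).1
  have hint : ∀ β γ : {x // x ∈ Δ}, ∃ n : ℤ, coroot β γ = (n : ℂ) :=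
    fun β γ => hcrys β (hΔ β.2) γ (hΔ γ.2)
  choose A hA using hint
  have hpair : ∀ (x : {x // x ∈ Δ} → ℤ) (β : {x // x ∈ Δ}),
      coroot β (∑ γ, x γ • (γ : V)) = ((Matrix.mulVec (Matrix.of A) x β : ℤ) : ℂ) := by
    intro x β
    simp [Matrix.mulVec, dotProduct, hA, mul_comm]
  have hdet : (Matrix.of A).det ≠ 0 := by
    intro h0
    obtain ⟨x, hx0, hx⟩ := Matrix.exists_mulVec_eq_zero_iff.mpr h0
    let y : V → ℤ := fun v => if h : v ∈ Δ then x ⟨v, h⟩ else 0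
    have hsum : ∑ γ ∈ Δ, y γ • γ = ∑ γ, x γ • (γ : V) := by
      rw [← Finset.sum_coe_sort Δ]
      exact Finset.sum_congr rfl fun γ _ => by simp [y]
    have hv := eq_zero_of_coroot_eq_zero Φ Δ coroot hspan h2 hcrys
      (fun a ha b hb => hs a ha b ▸ hsΦ a ha b hb) hΔ y fun β hβ => by
        rw [hsum, hpair x ⟨β, hβ⟩, hx]; simp
    rw [hsum] at hv
    refine hx0 (funext fun γ => ?_)
    have := Fintype.linearIndependent_iff.mp hΔind (fun γ => (x γ : ℂ))
      (by simpa [Int.cast_smul_eq_zsmul] using hv) γ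
    exact_mod_cast this
  let u : {x // x ∈ Δ} → ℤ := fun β => if (β : V) = α then 0 else 1
  let x : {x // x ∈ Δ} → ℤ := (Matrix.of A).det • (Matrix.of A).adjugate.mulVec u
  have hx : (Matrix.of A).mulVec x = ((Matrix.of A).det * (Matrix.of A).det) • u := by
    simp only [x, Matrix.mulVec_smul, Matrix.mulVec_mulVec, Matrix.mul_adjugate,
      Matrix.smul_mulVec, Matrix.one_mulVec, smul_smul]
  refine ⟨∑ γ, x γ • (γ : V), ?_, ?_, ?_⟩
  · intro a ha
    choose n hn using fun γ : {x // x ∈ Δ} => hcrys a ha γ (hΔ γ.2)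
    exact ⟨∑ γ, x γ * n γ, by simp [hn]⟩
  · rw [hpair x ⟨α, hα⟩, hx]
    simp [u]
  · intro β hβ hne
    refine ⟨_, ?_, hpair x ⟨β, hβ⟩⟩
    rw [hx]
    simpa [u, hne] using mul_self_pos.mpr hdet

end
end

section
/- Let λ ∈ 𝔥*. The group homomorphism Λ → ℤ^{Δ_[λ]} sending δ ∈ Λ to the tuple (⟨δ, β∨⟩)_{β ∈ Δ_[λ]} has image a finite-index subgroup of ℤ^{Δ_[λ]} (equivalently, the image is a full-rank sublattice of the weight lattice of the root system Φ_[λ]). -/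
/-!
The root lattice is contained in `Λ`, and its sublattice spanned by `Δ` already has an image of
finite index: this image is the row lattice of the integer matrix `A = (⟨α, β∨⟩)_{α, β ∈ Δ}`, so it
contains `det A • ℤ^Δ`, and only `det A ≠ 0` has to be shown (`det_pairing_ne_zero`).

If `det A = 0`, some nonzero integer combination `x = ∑ c_α α` of `Δ` satisfies `⟨x, β∨⟩ = 0` for
all `β ∈ Δ`.  The Weyl-invariant form `(x, y) = ∑_{γ ∈ Φ} ⟨x, γ∨⟩⟨y, γ∨⟩` satisfies
`2 (β, x) = (β, β) ⟨x, β∨⟩`, whence `(x, x) = 0`.  This form is positive definite on the root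
lattice, so `x = 0`, contradicting the linear independence of `Δ`.  The facts about the invariant
form come from Mathlib's `RootPairing`, which the given data define (`exists_rootPairing`).
-/

noncomputable section

variable {V : Type*} [AddCommGroup V] [Module ℂ V]

open Module in
/-- The pair `(Φ, coroot)` is a crystallographic root pairing in the sense of Mathlib.  The content
is that `coroot` is injective on `Φ`: two distinct roots with the same coroot would have reflections
whose product is a transvection of infinite order preserving the finite set `Φ`. -/
lemma exists_rootPairing (Φ : Finset V) (coroot : V → (V →ₗ[ℂ] ℂ)) (s : V → (V ≃ₗ[ℂ] V))
    (hspan : Submodule.span ℂ (Φ : Set V) = ⊤)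
    (h2 : ∀ α ∈ Φ, coroot α α = 2)
    (hcrys : ∀ α ∈ Φ, ∀ β ∈ Φ, ∃ n : ℤ, coroot α β = (n : ℂ))
    (hs : ∀ α ∈ Φ, ∀ x : V, s α x = x - coroot α x • α)
    (hsΦ : ∀ α ∈ Φ, ∀ β ∈ Φ, s α β ∈ Φ) :
    ∃ P : RootPairing {x // x ∈ Φ} ℂ V (Dual ℂ V), P.IsCrystallographic ∧
      P.toLinearMap = Dual.eval ℂ V ∧ (∀ i, P.root i = (i : V)) ∧
      ∀ i, P.coroot i = coroot (i : V) := by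
  have : FiniteDimensional ℂ V := ⟨⟨Φ, hspan⟩⟩
  have hmaps : ∀ α ∈ Φ, Set.MapsTo (preReflection α (coroot α)) (Φ : Set V) (Φ : Set V) := by
    intro α hα β hβ
    rw [preReflection_apply, ← hs α hα]
    exact hsΦ α hα β hβ
  have hinj : Function.Injective (fun i : {x // x ∈ Φ} => (coroot (i : V) : Dual ℂ V)) := by
    rintro ⟨α, hα⟩ ⟨β, hβ⟩ h
    have h : coroot α = coroot β := h
    have : IsAddTorsionFree V := .of_isTorsionFree ℂ V
    exact Subtype.ext <| eq_of_mapsTo_reflection_of_mem (f := coroot α) (g := coroot β)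
      Φ.finite_toSet (h2 α hα) (h2 β hβ) (h ▸ h2 α hα) (h ▸ h2 β hβ) (hmaps α hα) (hmaps β hβ) hβ
  have hr : Set.range (Function.Embedding.subtype (· ∈ Φ)) = (Φ : Set V) := by
    ext x
    simp
  refine ⟨RootPairing.mk'' (Dual.eval ℂ V) (Function.Embedding.subtype (· ∈ Φ)) ⟨_, hinj⟩
    (fun i => h2 i i.2) (fun i => ?_) (by rw [hr, hspan]), ⟨fun i j => ?_⟩, rfl,
    fun _ => rfl, fun _ => rfl⟩
  · rw [hr]
    exact hmaps i i.2
  · obtain ⟨n, hn⟩ := hcrys j j.2 i i.2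
    exact ⟨n, hn.symm⟩

/-- An integral combination of some roots that is killed by the coroots of the same roots is zero:
it is isotropic for the positive definite invariant form on the root lattice. -/
lemma sum_smul_root_eq_zero {ι κ N : Type*} [Finite ι] [Fintype κ] [AddCommGroup N] [Module ℂ N]
    (P : RootPairing ι ℂ V N) [P.IsCrystallographic] (f : κ → ι) (c : κ → ℤ)
    (h : ∀ j, P.toLinearMap (∑ i, c i • P.root (f i)) (P.coroot (f j)) = 0) :
    ∑ i, c i • P.root (f i) = 0 := by
  have := Fintype.ofFinite ι
  set x := ∑ i, c i • P.root (f i) with hx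
  have hmem : x ∈ P.rootSpan ℤ :=
    Submodule.sum_mem _ fun i _ => Submodule.smul_mem _ _ (Submodule.subset_span ⟨f i, rfl⟩)
  have horth : ∀ j, P.RootForm (P.root (f j)) x = 0 := by
    intro j
    have h1 := congrArg (P.toLinearMap x) (P.rootForm_self_smul_coroot (f j))
    rw [map_smul, h j, smul_zero, map_nsmul, P.toLinearMap_apply_apply_Polarization] at h1
    simpa using h1.symm
  have hself : P.RootForm x x = 0 := by
    conv_lhs => enter [1]; rw [hx]
    simp [horth]
  by_contra hne
  have hpos := P.posRootForm_posForm_pos_of_ne_zero ℤ (x := ⟨x, hmem⟩) (by simpa using hne)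
  have hz := P.algebraMap_posRootForm_posForm ℤ ⟨x, hmem⟩ ⟨x, hmem⟩
  rw [hself] at hz
  exact hpos.ne' (by simpa using hz)

/-- The matrix of pairings of a linearly independent family of roots is nonsingular. -/
lemma det_pairing_ne_zero {ι κ N : Type*} [Finite ι] [Fintype κ] [DecidableEq κ] [AddCommGroup N]
    [Module ℂ N] (P : RootPairing ι ℂ V N) [P.IsCrystallographic] (f : κ → ι)
    (hf : LinearIndependent ℂ (fun i => P.root (f i))) (A : Matrix κ κ ℤ)
    (hA : ∀ i j, P.toLinearMap (P.root (f i)) (P.coroot (f j)) = (A i j : ℂ)) :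
    A.det ≠ 0 := by
  intro hdet
  obtain ⟨c, hc0, hc⟩ := Matrix.exists_vecMul_eq_zero_iff.mpr hdet
  have hx := sum_smul_root_eq_zero P f c fun j => by
    have hj : ∑ i, c i * A i j = 0 := congrFun hc j
    simp only [map_sum, map_zsmul, LinearMap.sum_apply, LinearMap.smul_apply, hA, zsmul_eq_mul]
    exact_mod_cast hj
  refine hc0 (funext fun i => ?_)
  have := Fintype.linearIndependent_iff.mp hf (fun i => (c i : ℂ))
    (by simpa only [Int.cast_smul_eq_zsmul] using hx) i
  exact_mod_cast this

/-- A subgroup of `ℤ^κ` containing `d • ℤ^κ` for some `d ≠ 0` has finite index. -/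
lemma index_ne_zero_of_smul_mem {κ : Type*} [Finite κ] (S : AddSubgroup (κ → ℤ)) (d : ℤ)
    (hd : d ≠ 0) (h : ∀ v, d • v ∈ S) : S.index ≠ 0 := by
  have : Finite ((κ → ℤ) ⧸ S) := by
    have : AddGroup.FG ((κ → ℤ) ⧸ S) := inferInstance
    refine AddCommGroup.finite_of_fg_isAddTorsion _ fun q => ?_
    obtain ⟨v, rfl⟩ := QuotientAddGroup.mk_surjective q
    rw [isOfFinAddOrder_iff_zsmul_eq_zero]
    exact ⟨d, hd, (QuotientAddGroup.eq_zero_iff (d • v)).mpr (h v)⟩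
  exact AddSubgroup.index_ne_zero_of_finite

/-- Let `λ ∈ 𝔥*`.  The group homomorphism `Λ → ℤ^{Δ_[λ]}` sending
`δ ∈ Λ` to the tuple `(⟨δ, β∨⟩)_{β ∈ Δ_[λ]}` has image a finite-index subgroup of
`ℤ^{Δ_[λ]}` (equivalently, the image is a full-rank sublattice of the weight lattice of the
root system `Φ_[λ]`).

Setting: `Φ` is a finite reduced crystallographic root system in `V` with positive system
`Φpos`, coroot pairing `coroot`, reflections `s`, and Weyl group `W`; `Λ` is the weight
lattice (membership recorded by `InWeightLattice Φ coroot`).  `Δ` is the unique system of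
simple roots of `Φ_[λ]` contained in `Φ⁺`, recorded by the hypotheses below.  The image is
formalized as an additive subgroup `S` of `ℤ^{Δ}` whose members are exactly the tuples of
pairings of elements of `Λ`, and finite index is `S.index ≠ 0`. -/
theorem weightLattice_pairing_image_finite_index
    (Φ Φpos Δ : Finset V) (coroot : V → (V →ₗ[ℂ] ℂ)) (s : V → (V ≃ₗ[ℂ] V))
    (W : Subgroup (V ≃ₗ[ℂ] V))
    (hΦ0 : (0 : V) ∉ Φ)
    (hspan : Submodule.span ℂ (Φ : Set V) = ⊤)
    (h2 : ∀ α ∈ Φ, coroot α α = 2)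
    (hred : ∀ α ∈ Φ, ∀ c : ℂ, c • α ∈ (Φ : Set V) → c = 1 ∨ c = -1)
    (hcrys : ∀ α ∈ Φ, ∀ β ∈ Φ, ∃ n : ℤ, coroot α β = (n : ℂ))
    (hs : ∀ α ∈ Φ, ∀ x : V, s α x = x - coroot α x • α)
    (hsΦ : ∀ α ∈ Φ, ∀ β ∈ Φ, s α β ∈ Φ)
    (hW : W = Subgroup.closure (s '' (Φ : Set V)))
    (hpos : Φpos ⊆ Φ)
    (hsplit : ∀ α ∈ Φ, (α ∈ Φpos ↔ ¬(-α ∈ Φpos)))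
    (lam : V)
    -- `Δ` is the system of simple roots of `Φ_[λ]` contained in `Φ⁺`:
    (hΔsub : ∀ α ∈ Δ, α ∈ Φ ∧ α ∈ Φpos ∧ ∃ n : ℤ, coroot α lam = (n : ℂ))
    (hΔind : LinearIndependent ℂ (fun a : {x // x ∈ Δ} => (a : V)))
    (hΔgen : ∀ β ∈ Φ, β ∈ Φpos → (∃ n : ℤ, coroot β lam = (n : ℂ)) →
      ∃ c : V → ℕ, β = ∑ α ∈ Δ, (c α : ℤ) • α) :
    ∃ S : AddSubgroup ({x // x ∈ Δ} → ℤ),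
      (∀ v : {x // x ∈ Δ} → ℤ,
        v ∈ S ↔ ∃ δ : V, InWeightLattice Φ coroot δ ∧
          ∀ β : {x // x ∈ Δ}, coroot (β : V) δ = ((v β : ℤ) : ℂ)) ∧
      S.index ≠ 0 := by
  classical
  obtain ⟨P, hP, hlin, hroot, hcoroot⟩ := exists_rootPairing Φ coroot s hspan h2 hcrys hs hsΦ
  choose A hA using fun α β : {x // x ∈ Δ} =>
    hcrys β (hΔsub β β.2).1 α (hΔsub α α.2).1
  have hdet : (Matrix.of A).det ≠ 0 := by
    refine det_pairing_ne_zero P (fun i : {x // x ∈ Δ} => ⟨i, (hΔsub i i.2).1⟩) ?_ _ fun i j => ?_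
    · simpa only [hroot] using hΔind
    · simpa [hlin, hroot, hcoroot] using hA i j
  let S : AddSubgroup ({x // x ∈ Δ} → ℤ) :=
    { carrier := {v | ∃ δ : V, InWeightLattice Φ coroot δ ∧
        ∀ β : {x // x ∈ Δ}, coroot (β : V) δ = ((v β : ℤ) : ℂ)}
      zero_mem' := ⟨0, fun α _ => ⟨0, by simp⟩, by simp⟩
      add_mem' := by
        rintro v w ⟨δ, hδ, hv⟩ ⟨ε, hε, hw⟩
        refine ⟨δ + ε, fun α hα => ?_, fun β => by simp [hv, hw]⟩
        obtain ⟨m, hm⟩ := hδ α hα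
        obtain ⟨n, hn⟩ := hε α hα
        exact ⟨m + n, by simp [hm, hn]⟩
      neg_mem' := by
        rintro v ⟨δ, hδ, hv⟩
        refine ⟨-δ, fun α hα => ?_, fun β => by simp [hv]⟩
        obtain ⟨m, hm⟩ := hδ α hα
        exact ⟨-m, by simp [hm]⟩ }
  refine ⟨S, fun v => Iff.rfl, index_ne_zero_of_smul_mem S _ hdet fun v => ?_⟩
  -- `det A • v` is the row combination of `A` with coefficients `v * adj A`.
  set c := Matrix.vecMul v (Matrix.of A).adjugate with hc
  have hcA : Matrix.vecMul c (Matrix.of A) = (Matrix.of A).det • v := by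
    rw [hc, Matrix.vecMul_vecMul, Matrix.adjugate_mul, Matrix.vecMul_smul, Matrix.vecMul_one]
  refine ⟨∑ α : {x // x ∈ Δ}, c α • (α : V), fun γ hγ => ?_, fun β => ?_⟩
  · choose n hn using fun α : {x // x ∈ Δ} => hcrys γ hγ α (hΔsub α α.2).1
    exact ⟨∑ α, c α * n α, by simp [hn]⟩
  · have hβ : ∑ α, c α * A α β = ((Matrix.of A).det • v) β := congrFun hcA β
    rw [← hβ]
    simp [hA]

end
end

section
/- Let (R, 𝔪) be a commutative Noetherian local ring which is complete for the 𝔪-adic topology, and let M and N be finitely generated R-modules. Then the canonical R-module map M ⊗_R N → lim_k (M/𝔪^k M ⊗_R N/𝔪^k N), induced by the reduction maps M ⊗_R N → M/𝔪^k M ⊗_R N/𝔪^k N into the inverse limit of the system with the natural surjective transition maps M/𝔪^{k+1}M ⊗_R N/𝔪^{k+1}N → M/𝔪^k M ⊗_R N/𝔪^k N, is an isomorphism. -/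
/-!
The reduction map `M ⊗ N → M/𝔪^k M ⊗ N/𝔪^k N` is surjective, and by right exactness of the tensor
product its kernel is exactly `𝔪^k (M ⊗ N)` (`ker_tensorQuotMap`).  The inverse limit is therefore
the `𝔪`-adic completion of `M ⊗ N`, and it remains to see that the finitely generated module
`P = M ⊗ N` is `𝔪`-adically complete.  Separatedness is Krull's intersection theorem.  Convergence
of Cauchy sequences (`isPrecomplete_of_finite`) follows from the surjectivity of
`R̂ ⊗ P → P̂` for finitely generated `P`, since `R → R̂` is surjective.
-/

open scoped TensorProduct

noncomputable section

variable {R : Type*} [CommRing R]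

/-- The quotient `M/𝔪^k M` of a module `M` by the `k`-th power of an ideal `𝔪`. -/
abbrev ModQuot (m : Ideal R) (M : Type*) [AddCommGroup M] [Module R M] (k : ℕ) :=
  M ⧸ ((m ^ k) • (⊤ : Submodule R M))

/-- The canonical reduction map `M/𝔪^{k+1} M → M/𝔪^k M`. -/
def modQuotTrans (m : Ideal R) (M : Type*) [AddCommGroup M] [Module R M] (k : ℕ) :
    ModQuot m M (k + 1) →ₗ[R] ModQuot m M k :=
  Submodule.mapQ _ _ LinearMap.id
    (by
      intro x hx
      simp only [Submodule.mem_comap, LinearMap.id_coe, id_eq]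
      exact Submodule.smul_mono_left (Ideal.pow_le_pow_right (Nat.le_succ k)) hx)

/-- The natural surjective transition map
`M/𝔪^{k+1}M ⊗ N/𝔪^{k+1}N → M/𝔪^k M ⊗ N/𝔪^k N`. -/
def tensorQuotTrans (m : Ideal R) (M N : Type*) [AddCommGroup M] [Module R M]
    [AddCommGroup N] [Module R N] (k : ℕ) :
    (ModQuot m M (k + 1)) ⊗[R] (ModQuot m N (k + 1)) →ₗ[R]
      (ModQuot m M k) ⊗[R] (ModQuot m N k) :=
  TensorProduct.map (modQuotTrans m M k) (modQuotTrans m N k)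

/-- The canonical map `M ⊗_R N → M/𝔪^k M ⊗_R N/𝔪^k N` induced by the reductions. -/
def tensorQuotMap (m : Ideal R) (M N : Type*) [AddCommGroup M] [Module R M]
    [AddCommGroup N] [Module R N] (k : ℕ) :
    M ⊗[R] N →ₗ[R] (ModQuot m M k) ⊗[R] (ModQuot m N k) :=
  TensorProduct.map (Submodule.mkQ _) (Submodule.mkQ _)

/-- Finitely generated modules over a precomplete ring are precomplete: the completion of `M` is
generated over the completion of `R` by the image of `M`, and `R` surjects onto its completion. -/
lemma isPrecomplete_of_finite (I : Ideal R) [IsPrecomplete I R] (M : Type*) [AddCommGroup M]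
    [Module R M] [Module.Finite R M] : IsPrecomplete I M := by
  rw [← AdicCompletion.of_surjective_iff]
  intro y
  obtain ⟨t, rfl⟩ := AdicCompletion.ofTensorProduct_surjective_of_finite I M y
  induction t with
  | zero => exact ⟨0, by simp⟩
  | add a b ha hb =>
    obtain ⟨u, hu⟩ := ha
    obtain ⟨v, hv⟩ := hb
    exact ⟨u + v, by simp [hu, hv]⟩
  | tmul r x =>
    obtain ⟨r, rfl⟩ := AdicCompletion.of_surjective I R r
    refine ⟨r • x, ?_⟩
    rw [AdicCompletion.ofTensorProduct_tmul, map_smul]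
    ext n
    rfl

lemma tensorQuotMap_surjective (m : Ideal R) (M N : Type*) [AddCommGroup M] [Module R M]
    [AddCommGroup N] [Module R N] (k : ℕ) : Function.Surjective (tensorQuotMap m M N k) :=
  TensorProduct.map_surjective (Submodule.mkQ_surjective _) (Submodule.mkQ_surjective _)

lemma ker_tensorQuotMap (m : Ideal R) (M N : Type*) [AddCommGroup M] [Module R M]
    [AddCommGroup N] [Module R N] (k : ℕ) :
    LinearMap.ker (tensorQuotMap m M N k) = m ^ k • (⊤ : Submodule R (M ⊗[R] N)) := by
  apply le_antisymm
  · rw [tensorQuotMap, TensorProduct.map_ker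
      (LinearMap.exact_subtype_mkQ _) (Submodule.mkQ_surjective _)
      (LinearMap.exact_subtype_mkQ _) (Submodule.mkQ_surjective _), sup_le_iff]
    constructor
    · rintro _ ⟨t, rfl⟩
      induction t with
      | zero => simp
      | add a b ha hb => rw [map_add]; exact add_mem ha hb
      | tmul x y =>
        -- `𝔪^k N` maps into `𝔪^k (M ⊗ N)` under `x ⊗ -`.
        have h := Submodule.mem_map_of_mem (f := TensorProduct.mk R M N x) y.2
        rw [Submodule.map_smul''] at h
        exact Submodule.smul_mono le_rfl le_top h
    · rintro _ ⟨t, rfl⟩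
      induction t with
      | zero => simp
      | add a b ha hb => rw [map_add]; exact add_mem ha hb
      | tmul x y =>
        have h := Submodule.mem_map_of_mem (f := (TensorProduct.mk R M N).flip y) x.2
        rw [Submodule.map_smul''] at h
        exact Submodule.smul_mono le_rfl le_top h
  · rw [Submodule.smul_le]
    intro r hr t _
    rw [LinearMap.mem_ker]
    induction t with
    | zero => simp
    | add a b ha hb => rw [smul_add, map_add, ha trivial, hb trivial, add_zero]
    | tmul x y =>
      have h : Submodule.mkQ (m ^ k • (⊤ : Submodule R M)) (r • x) = 0 :=
        (Submodule.Quotient.mk_eq_zero _).2 (Submodule.smul_mem_smul hr trivial)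
      rw [TensorProduct.smul_tmul', tensorQuotMap, TensorProduct.map_tmul, h,
        TensorProduct.zero_tmul]

lemma tensorQuotTrans_tensorQuotMap (m : Ideal R) (M N : Type*) [AddCommGroup M] [Module R M]
    [AddCommGroup N] [Module R N] (k : ℕ) (t : M ⊗[R] N) :
    tensorQuotTrans m M N k (tensorQuotMap m M N (k + 1) t) = tensorQuotMap m M N k t := by
  induction t with
  | zero => simp
  | add a b ha hb => simp only [map_add, ha, hb]
  | tmul x y => rfl

lemma tensorQuotMap_eq_iff (m : Ideal R) (M N : Type*) [AddCommGroup M] [Module R M]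
    [AddCommGroup N] [Module R N] (k : ℕ) (s t : M ⊗[R] N) :
    tensorQuotMap m M N k s = tensorQuotMap m M N k t ↔
      s ≡ t [SMOD (m ^ k • ⊤ : Submodule R (M ⊗[R] N))] := by
  rw [SModEq.sub_mem, ← ker_tensorQuotMap, LinearMap.mem_ker, map_sub, sub_eq_zero]

/-- Let `(R, 𝔪)` be a commutative Noetherian local ring which is complete for
the `𝔪`-adic topology, and let `M` and `N` be finitely generated `R`-modules.  Then the
canonical `R`-linear map `M ⊗_R N → lim_k (M/𝔪^k M ⊗_R N/𝔪^k N)` is an isomorphism; here the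
inverse limit is realized as the submodule of the product `∏_k (M/𝔪^k M ⊗_R N/𝔪^k N)`
consisting of the sequences compatible with the natural transition maps, and the assertion is
that the canonical map is injective with image exactly this inverse limit. -/
theorem tensorProduct_bijective_onto_inverseLimit_of_complete_local
    (R : Type*) [CommRing R] [IsNoetherianRing R] [IsLocalRing R]
    [IsAdicComplete (IsLocalRing.maximalIdeal R) R]
    (M N : Type*) [AddCommGroup M] [Module R M] [Module.Finite R M]
    [AddCommGroup N] [Module R N] [Module.Finite R N] :
    Function.Injective
        (LinearMap.pi (fun k : ℕ => tensorQuotMap (IsLocalRing.maximalIdeal R) M N k) :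
          M ⊗[R] N →ₗ[R] Π k : ℕ,
            (ModQuot (IsLocalRing.maximalIdeal R) M k) ⊗[R]
              (ModQuot (IsLocalRing.maximalIdeal R) N k))
      ∧ Set.range
          (LinearMap.pi (fun k : ℕ => tensorQuotMap (IsLocalRing.maximalIdeal R) M N k) :
            M ⊗[R] N →ₗ[R] Π k : ℕ,
              (ModQuot (IsLocalRing.maximalIdeal R) M k) ⊗[R]
                (ModQuot (IsLocalRing.maximalIdeal R) N k)) =
        {f | ∀ k : ℕ, tensorQuotTrans (IsLocalRing.maximalIdeal R) M N k (f (k + 1)) = f k} := by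
  constructor
  · intro s t hst
    rw [IsHausdorff.eq_iff_smodEq (I := IsLocalRing.maximalIdeal R)]
    exact fun k => (tensorQuotMap_eq_iff _ M N k s t).1 (congrFun hst k)
  · ext f
    constructor
    · rintro ⟨t, rfl⟩ k
      exact tensorQuotTrans_tensorQuotMap _ M N k t
    · intro hf
      choose x hx using fun k =>
        tensorQuotMap_surjective (IsLocalRing.maximalIdeal R) M N k (f k)
      -- Compatibility of `f` propagates to all pairs of indices, so the lifts are Cauchy.
      have hcauchy : ∀ {i j : ℕ}, i ≤ j →
          tensorQuotMap (IsLocalRing.maximalIdeal R) M N i (x j) = f i := by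
        intro i j hij
        induction hij using Nat.decreasingInduction with
        | self => exact hx j
        | of_succ k _ ih => rw [← tensorQuotTrans_tensorQuotMap, ih, hf k]
      obtain ⟨L, hL⟩ := (isPrecomplete_of_finite (IsLocalRing.maximalIdeal R) (M ⊗[R] N)).prec
        (f := x) fun {i j} hij =>
          (tensorQuotMap_eq_iff _ M N i _ _).1 ((hx i).trans (hcauchy hij).symm)
      refine ⟨L, funext fun k => ?_⟩
      exact ((tensorQuotMap_eq_iff _ M N k _ _).2 (hL k)).symm.trans (hx k)

end
end

section
/- Let R be a commutative ring, let w and s be ring automorphisms of R, and set s' = w⁻¹ ∘ s ∘ w. Let R^s and R^{s'} denote the fixed subrings of s and s' respectively. Then there is an isomorphism of (R,R)-bimodules R_w ⊗_R (R ⊗_{R^s} R) ≅ (R ⊗_{R^{s'}} R) ⊗_R R_w. -/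
/-!
Since `w` carries `R^{s'}` onto `R^s`, the additive map `a ⊗ b ↦ w⁻¹ b ⊗ w⁻¹ a` is a well-defined
isomorphism `R ⊗_{R^s} R ≃+ R ⊗_{R^{s'}} R` (`swapEquiv`); the factors are exchanged because the
right-hand side of the theorem stores the second factor of `R ⊗_{R^{s'}} R` first. The outer tensor
factors are harmless: `R ⊗_R M ≅ M`, and `w : R → R_w` is an isomorphism of left `R`-modules
(`Tw.equivSelf`), so `N ⊗_R R_w ≅ N`. The isomorphism is thus
`g ⊗ (a ⊗ b) ↦ (w⁻¹ b ⊗ w⁻¹ (g a)) ⊗ 1`, and both intertwining identities are read off on pure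
tensors.
-/

open scoped TensorProduct

noncomputable section

/-- For a ring automorphism `u` of a commutative ring `R`, `Tw R u` is the underlying additive
group of `R`, regarded as the `(R,R)`-bimodule `R_u` whose *left* action is twisted through `u`
(`f · g = u f * g`) and whose right action is plain multiplication (`g · f = g * f`).
As the Lean `Module R` instance we install the twisted left action. -/
def Tw (R : Type*) [CommRing R] (_u : R ≃+* R) : Type _ := R

namespace Tw

variable {R : Type*} [CommRing R] (u : R ≃+* R)

instance : AddCommGroup (Tw R u) := inferInstanceAs (AddCommGroup R)

/-- The left `R`-action on `R_u`, twisted through `u` : `f • g = u f * g`. -/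
instance : Module R (Tw R u) := Module.compHom R (u : R →+* R)

end Tw

variable {R : Type*} [CommRing R]

/-- The fixed subring `R^u = {f ∈ R : u f = f}` of a ring automorphism `u`. -/
def fixedSubring (u : R ≃+* R) : Subring R :=
  RingHom.eqLocus (u : R →+* R) (RingHom.id R)

/-- The conjugated automorphism `s' = w⁻¹ ∘ s ∘ w`. -/
def conjAut (w s : R ≃+* R) : R ≃+* R := (w.trans s).trans w.symm

lemma conjAut_apply (w s : R ≃+* R) (x : R) : conjAut w s x = w.symm (s (w x)) := rfl

/-- Right multiplication by `f : R`, as an `R^S`-linear endomorphism of `R`. -/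
def mulRightS (S : Subring R) (f : R) : R →ₗ[S] R where
  toFun b := b * f
  map_add' a b := add_mul a b f
  map_smul' c b := by simp [smul_mul_assoc]

/-- The endomorphism of the `(R,R)`-bimodule `R ⊗_{S} R` (for a subring `S ⊆ R`) given by
right multiplication by `f` on the *second* tensor factor.  It is `R`-linear for the
`R`-module structure coming from the first tensor factor. -/
def mulSecond (S : Subring R) (f : R) :
    TensorProduct S R R →ₗ[R] TensorProduct S R R where
  toFun := LinearMap.lTensor R (mulRightS S f)
  map_add' x y := map_add _ x y
  map_smul' r x := by
    induction x using TensorProduct.induction_on with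
    | zero => simp
    | tmul a b => simp [TensorProduct.smul_tmul', smul_eq_mul]
    | add x y hx hy => simp only [smul_add, map_add, RingHom.id_apply] at *; rw [hx, hy]

/-- The additive map `a ⊗ b ↦ φ b ⊗ φ a` from `R ⊗_S R` to `R ⊗_T R`, for a ring automorphism `φ`
carrying `S` into `T`. -/
def swapHom (S T : Subring R) (φ : R ≃+* R) (h : ∀ x ∈ S, φ x ∈ T) :
    TensorProduct S R R →+ TensorProduct T R R :=
  TensorProduct.liftAddHom
    (AddMonoidHom.mk' (fun a => AddMonoidHom.mk' (fun b => φ b ⊗ₜ[T] φ a)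
      (fun b c => by simp [TensorProduct.add_tmul]))
      (fun a c => by ext b; simp [TensorProduct.tmul_add]))
    (fun r a b => by
      have := TensorProduct.smul_tmul (R := T) (⟨φ r, h r r.2⟩ : T) (φ b) (φ a)
      simpa [Subring.smul_def] using this.symm)

lemma swapHom_tmul (S T : Subring R) (φ : R ≃+* R) (h : ∀ x ∈ S, φ x ∈ T) (a b : R) :
    swapHom S T φ h (a ⊗ₜ b) = φ b ⊗ₜ φ a := rfl

lemma swapHom_swapHom (S T : Subring R) (φ ψ : R ≃+* R) (h : ∀ x ∈ S, φ x ∈ T)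
    (h' : ∀ x ∈ T, ψ x ∈ S) (hψ : ∀ x, ψ (φ x) = x) (x : TensorProduct S R R) :
    swapHom T S ψ h' (swapHom S T φ h x) = x := by
  induction x using TensorProduct.induction_on with
  | zero => simp
  | tmul a b => simp [swapHom_tmul, hψ]
  | add x y hx hy => rw [map_add, map_add, hx, hy]

/-- The additive isomorphism `a ⊗ b ↦ w⁻¹ b ⊗ w⁻¹ a` between `R ⊗_{R^s} R` and
`R ⊗_{R^{s'}} R`, where `s' = w⁻¹ ∘ s ∘ w`. -/
def swapEquiv (w s : R ≃+* R) :
    TensorProduct (fixedSubring s) R R ≃+ TensorProduct (fixedSubring (conjAut w s)) R R :=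
  have h : ∀ x ∈ fixedSubring s, w.symm x ∈ fixedSubring (conjAut w s) := fun x hx => by
    have hx : s x = x := hx
    change conjAut w s (w.symm x) = w.symm x
    simp [conjAut_apply, hx]
  have h' : ∀ x ∈ fixedSubring (conjAut w s), w x ∈ fixedSubring s := fun x hx => by
    have hx : w.symm (s (w x)) = x := hx
    change s (w x) = w x
    rwa [RingEquiv.symm_apply_eq] at hx
  { swapHom _ _ w.symm h with
    invFun := swapHom _ _ w h'
    left_inv := swapHom_swapHom _ _ _ _ h h' (by simp)
    right_inv := swapHom_swapHom _ _ _ _ h' h (by simp) }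

lemma swapEquiv_tmul (w s : R ≃+* R) (a b : R) :
    swapEquiv w s (a ⊗ₜ b) = w.symm b ⊗ₜ w.symm a := rfl

lemma mulSecond_tmul (S : Subring R) (f a b : R) :
    mulSecond S f (a ⊗ₜ b) = a ⊗ₜ (b * f) := rfl

lemma swapEquiv_smul (w s : R ≃+* R) (f : R) (x : TensorProduct (fixedSubring s) R R) :
    swapEquiv w s (w f • x) = mulSecond _ f (swapEquiv w s x) := by
  induction x using TensorProduct.induction_on with
  | zero => simp
  | tmul a b => simp [TensorProduct.smul_tmul', swapEquiv_tmul, mulSecond_tmul, mul_comm]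
  | add x y hx hy => rw [smul_add, map_add, map_add, map_add, hx, hy]

lemma swapEquiv_mulSecond (w s : R ≃+* R) (f : R) (x : TensorProduct (fixedSubring s) R R) :
    swapEquiv w s (mulSecond _ f x) = w.symm f • swapEquiv w s x := by
  induction x using TensorProduct.induction_on with
  | zero => simp
  | tmul a b => simp [TensorProduct.smul_tmul', swapEquiv_tmul, mulSecond_tmul, mul_comm]
  | add x y hx hy => rw [map_add, map_add, map_add, smul_add, hx, hy]

/-- The map `w`, as an isomorphism from `R` to `R_w` with its twisted left action. -/
def Tw.equivSelf (w : R ≃+* R) : R ≃ₗ[R] Tw R w :=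
  { w.toAddEquiv with
    map_smul' := fun r x => map_mul w r x }

/-- The isomorphism `N ≅ N ⊗_R R_w`, `n ↦ n ⊗ 1`. -/
def tensorTw (w : R ≃+* R) (N : Type*) [AddCommGroup N] [Module R N] :
    N ≃ₗ[R] TensorProduct R N (Tw R w) :=
  (TensorProduct.rid R N).symm ≪≫ₗ TensorProduct.congr (.refl R N) (Tw.equivSelf w)

lemma rTensor_tensorTw (w : R ≃+* R) {N : Type*} [AddCommGroup N] [Module R N]
    (g : N →ₗ[R] N) (n : N) :
    LinearMap.rTensor (Tw R w) g (tensorTw w N n) = tensorTw w N (g n) := by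
  simp [tensorTw]

/-- Let `R` be a commutative ring, let `w` and `s` be ring automorphisms of
`R`, and set `s' = w⁻¹ ∘ s ∘ w`.  Let `R^s` and `R^{s'}` be the fixed subrings.  Then there is
an isomorphism of `(R,R)`-bimodules `R_w ⊗_R (R ⊗_{R^s} R) ≅ (R ⊗_{R^{s'}} R) ⊗_R R_w`.

Formalization of the two sides:
* The left-hand side is `TensorProduct R R (TensorProduct ↥(R^s) R R)`; the outer tensor
  product is balanced using the plain right action of `R_w` (so its left factor is `R` with the
  standard module structure) and the left action of `R ⊗_{R^s} R` on its first factor.  Its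
  bimodule left action is `f • x` for `(w f) • x` via the canonical scalar action (i.e.
  `f·(g ⊗ a ⊗ b) = ((w f)g) ⊗ a ⊗ b`), and its bimodule right action is
  `mulSecond (R^s) f` on the inner tensor factor (i.e. `(g ⊗ a ⊗ b)·f = g ⊗ a ⊗ (bf)`).
* The right-hand side is `TensorProduct R (TensorProduct ↥(R^{s'}) R R) (Tw R w)`, where the
  inner tensor factor records the bimodule `R ⊗_{R^{s'}} R` with its *second* (math) factor
  written first, so that the outer tensor product is balanced using the right action of
  `R ⊗_{R^{s'}} R` (on its second math factor) and the twisted left action of `R_w`.  Its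
  bimodule left action (on the first math factor of `R ⊗_{R^{s'}} R`) is `mulSecond (R^{s'}) f`
  on the inner factor, and its bimodule right action (right multiplication on `R_w`) is
  `(w⁻¹ f) • x` via the canonical scalar action.

The conclusion produces an additive isomorphism intertwining the two left actions and the two
right actions, i.e. an isomorphism of `(R,R)`-bimodules. -/
theorem tw_tensor_bimodule_iso
    (R : Type*) [CommRing R] (w s : R ≃+* R) :
    ∃ e : TensorProduct R R (TensorProduct ↥(fixedSubring s) R R) ≃+
          TensorProduct R (TensorProduct ↥(fixedSubring (conjAut w s)) R R) (Tw R w),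
      -- `e` intertwines the left `R`-actions of the two bimodules:
      (∀ (f : R) (x : TensorProduct R R (TensorProduct ↥(fixedSubring s) R R)),
          e ((w f) • x) =
            (LinearMap.rTensor (Tw R w) (mulSecond (fixedSubring (conjAut w s)) f)) (e x)) ∧
      -- `e` intertwines the right `R`-actions of the two bimodules:
      (∀ (f : R) (x : TensorProduct R R (TensorProduct ↥(fixedSubring s) R R)),
          e ((LinearMap.lTensor R (mulSecond (fixedSubring s) f)) x) =
            (w.symm f) • e x) := by
  refine ⟨((TensorProduct.lid R _).toAddEquiv.trans (swapEquiv w s)).trans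
    (tensorTw w _).toAddEquiv, fun f x => ?_, fun f x => ?_⟩
  · simp [swapEquiv_smul, rTensor_tensorTw]
  · have h : TensorProduct.lid R _ (LinearMap.lTensor R (mulSecond (fixedSubring s) f) x) =
        mulSecond (fixedSubring s) f (TensorProduct.lid R _ x) := by
      induction x using TensorProduct.induction_on with
      | zero => simp
      | tmul a b => simp
      | add x y hx hy => simp only [map_add, hx, hy]
    simp [h, swapEquiv_mulSecond]

end
end
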